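/- arXiv:1808.03613 — 2 statements merged into one kernel-verified Lean document; each statement's English description precedes it below -/
import Mathlib

section
/- In the RF single-relay model (L = 1, with relay erasure probabilities ε_SR and ε_RD), the probability of successful decoding equals ∑ α(m, m_D, m_RD) · ∑_{m' = max(0, K−m_D)}^{N_R} B(m', N_R, ε_RD) · P2((m' + m_D, m − m_RD + m_D, m_D), K), where α(m, m_D, m_RD) = C(N_S, m_RD) · C(N_S − m_RD, m − m_RD) · C(N_S − m, m_D − m_RD) · (1−ε_SR)^m ε_SR^{N_S−m} (1−ε_SD)^{m_D} ε_SD^{N_S−m_D}, and the outer sum is over integers m, m_D with 0 ≤ m, m_D ≤ N_S and m + m_D ≥ K, and m_RD with max(0, m + m_D − N_S) ≤ m_RD ≤ min(m, m_D). -/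
open Finset

/-- `P(m,K) = ∏_{i=0}^{K-1} (1 - q^{i-m})`. -/
noncomputable def Pfr (q m K : ℕ) : ℝ :=
  ∏ i ∈ Finset.range K, (1 - (q : ℝ) ^ ((i : ℤ) - (m : ℤ)))

/-- The Gaussian binomial coefficient `[K; r]_q`. -/
noncomputable def gaussBinom (q K r : ℕ) : ℝ :=
  ∏ i ∈ Finset.range r, (((q : ℝ) ^ (K - i) - 1) / ((q : ℝ) ^ (r - i) - 1))

/-- `P_r(m,K) = q^{-m(K-r)} · [K; r]_q · ∏_{i=0}^{r-1} (1 - q^{i-m})`. -/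
noncomputable def Prk (q m K r : ℕ) : ℝ :=
  (q : ℝ) ^ (-(m : ℤ) * ((K : ℤ) - (r : ℤ))) * gaussBinom q K r *
    ∏ i ∈ Finset.range r, (1 - (q : ℝ) ^ ((i : ℤ) - (m : ℤ)))

/-- `P2((m1,m2,m12),K)`; the lower bound `max(0, K-m1+m12, K-m2+m12)` is expressed
with truncated natural subtraction. -/
noncomputable def P2 (q K m1 m2 m12 : ℕ) : ℝ :=
  ∑ i ∈ Finset.Icc (max (K + m12 - m1) (K + m12 - m2)) (min m12 K),
    Prk q m12 K i * Pfr q (m1 - m12) (K - i) * Pfr q (m2 - m12) (K - i)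

/-- Binomial probability `B(m,N,ε) = C(N,m) (1-ε)^m ε^{N-m}`. -/
noncomputable def Bpmf (m N : ℕ) (ε : ℝ) : ℝ :=
  (N.choose m : ℝ) * (1 - ε) ^ m * ε ^ (N - m)

/-- The multinomial factor `α(m, m_D, m_RD)` of the RF single-relay model. -/
noncomputable def alphaRF (NS : ℕ) (εSR εSD : ℝ) (m mD mRD : ℕ) : ℝ :=
  (NS.choose mRD : ℝ) * ((NS - mRD).choose (m - mRD) : ℝ) *
    ((NS - m).choose (mD - mRD) : ℝ) *
    (1 - εSR) ^ m * εSR ^ (NS - m) * (1 - εSD) ^ mD * εSD ^ (NS - mD)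

open scoped BigOperators

section Algebra

lemma gaussBinom_succ (q K r : ℕ) :
    gaussBinom q K (r + 1) =
      gaussBinom q K r * (((q : ℝ) ^ (K - r) - 1) / ((q : ℝ) ^ (r + 1) - 1)) := by
  unfold gaussBinom
  simp only [Finset.prod_div_distrib]
  rw [Finset.prod_range_succ, Finset.prod_range_succ' (fun i => (q : ℝ) ^ (r + 1 - i) - 1)]
  simp only [Nat.add_sub_add_right, Nat.sub_zero]
  rw [mul_div_mul_comm]

lemma prod_one_sub_zpow_succ_succ {q : ℕ} (m r : ℕ) :
    ∏ i ∈ Finset.range (r + 1), (1 - (q : ℝ) ^ ((i : ℤ) - ((m + 1 : ℕ) : ℤ))) =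
      (∏ i ∈ Finset.range r, (1 - (q : ℝ) ^ ((i : ℤ) - (m : ℤ)))) *
        (1 - (q : ℝ) ^ (-((m + 1 : ℕ) : ℤ))) := by
  rw [Finset.prod_range_succ', Nat.cast_zero, zero_sub]
  refine congrArg₂ _ (Finset.prod_congr rfl fun i _ => ?_) rfl
  congr 2
  push_cast
  ring

lemma Pfr_eq_zero {q m K : ℕ} (h : m < K) : Pfr q m K = 0 := by
  unfold Pfr
  exact Finset.prod_eq_zero (Finset.mem_range.2 h) (by simp)

lemma Prk_eq_zero {q m K r : ℕ} (h : m < r) : Prk q m K r = 0 := by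
  unfold Prk
  rw [Finset.prod_eq_zero (Finset.mem_range.2 h) (by simp), mul_zero]

lemma Prk_zero_right (q m K : ℕ) : Prk q m K 0 = (q : ℝ) ^ (-(m : ℤ) * (K : ℤ)) := by
  simp [Prk, gaussBinom]

lemma Prk_succ_zero {q : ℕ} (hq : 1 < q) (m K : ℕ) :
    Prk q (m + 1) K 0 = Prk q m K 0 * (q : ℝ) ^ (-(K : ℤ)) := by
  have hq0 : (q : ℝ) ≠ 0 := by positivity
  rw [Prk_zero_right, Prk_zero_right, ← zpow_add₀ hq0]
  congr 1
  push_cast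
  ring

/-- The rank of a uniformly random matrix evolves as a Markov chain when a row is added. -/
lemma Prk_succ_succ {q : ℕ} (hq : 1 < q) (m : ℕ) {K r : ℕ} (hr : r + 1 ≤ K) :
    Prk q (m + 1) K (r + 1) =
      Prk q m K (r + 1) * (q : ℝ) ^ (((r + 1 : ℕ) : ℤ) - (K : ℤ)) +
        Prk q m K r * (1 - (q : ℝ) ^ ((r : ℤ) - (K : ℤ))) := by
  have hq0 : (q : ℝ) ≠ 0 := by positivity
  obtain ⟨d, rfl⟩ := Nat.exists_eq_add_of_le hr
  unfold Prk
  rw [prod_one_sub_zpow_succ_succ, gaussBinom_succ, Finset.prod_range_succ]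
  have hd : r + 1 + d - r = d + 1 := by omega
  rw [hd]
  have hden : (q : ℝ) ^ (r + 1) - 1 ≠ 0 := by
    have : 1 < (q : ℝ) ^ (r + 1) := one_lt_pow₀ (by exact_mod_cast hq) (by omega)
    linarith
  set G := gaussBinom q (r + 1 + d) r
  set P := ∏ i ∈ Finset.range r, (1 - (q : ℝ) ^ ((i : ℤ) - (m : ℤ)))
  have e1 : (q : ℝ) ^ (-((m + 1 : ℕ) : ℤ) * (((r + 1 + d : ℕ) : ℤ) - ((r + 1 : ℕ) : ℤ))) =
      ((q : ℝ) ^ (m * d))⁻¹ * ((q : ℝ) ^ d)⁻¹ := by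
    rw [← mul_inv, ← pow_add, ← zpow_natCast, ← zpow_neg]
    congr 1
    push_cast
    ring
  have e2 : (q : ℝ) ^ (-((m : ℕ) : ℤ) * (((r + 1 + d : ℕ) : ℤ) - ((r + 1 : ℕ) : ℤ))) =
      ((q : ℝ) ^ (m * d))⁻¹ := by
    rw [← zpow_natCast, ← zpow_neg]
    congr 1
    push_cast
    ring
  have e3 : (q : ℝ) ^ (-((m : ℕ) : ℤ) * (((r + 1 + d : ℕ) : ℤ) - (r : ℤ))) =
      ((q : ℝ) ^ (m * d))⁻¹ * ((q : ℝ) ^ m)⁻¹ := by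
    rw [← mul_inv, ← pow_add, ← zpow_natCast, ← zpow_neg]
    congr 1
    push_cast
    ring
  have e4 : (q : ℝ) ^ (((r + 1 : ℕ) : ℤ) - ((r + 1 + d : ℕ) : ℤ)) = ((q : ℝ) ^ d)⁻¹ := by
    rw [← zpow_natCast, ← zpow_neg]
    congr 1
    push_cast
    ring
  have e5 : (q : ℝ) ^ ((r : ℤ) - ((r + 1 + d : ℕ) : ℤ)) = ((q : ℝ) ^ d * q)⁻¹ := by
    rw [← pow_succ, ← zpow_natCast, ← zpow_neg]
    congr 1
    push_cast
    ring
  have e6 : (q : ℝ) ^ ((r : ℤ) - (m : ℤ)) = (q : ℝ) ^ r * ((q : ℝ) ^ m)⁻¹ := by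
    rw [zpow_sub₀ hq0, zpow_natCast, zpow_natCast, div_eq_mul_inv]
  have e7 : (q : ℝ) ^ (-((m + 1 : ℕ) : ℤ)) = ((q : ℝ) ^ m * q)⁻¹ := by
    rw [zpow_neg, zpow_natCast, pow_succ]
  rw [e1, e2, e3, e4, e5, e6, e7, pow_succ (q : ℝ) d]
  rw [pow_succ] at hden ⊢
  have h1 : (q : ℝ) ^ m ≠ 0 := pow_ne_zero _ hq0
  have h2 : (q : ℝ) ^ d ≠ 0 := pow_ne_zero _ hq0
  have h3 : (q : ℝ) ^ (m * d) ≠ 0 := pow_ne_zero _ hq0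
  generalize (q : ℝ) ^ m = y at *
  generalize (q : ℝ) ^ d = a at *
  generalize (q : ℝ) ^ (m * d) = z at *
  generalize (q : ℝ) ^ r = s at *
  generalize (q : ℝ) = x at *
  have hden' : x * s - 1 ≠ 0 := by rwa [mul_comm]
  field_simp
  ring

lemma Prk_self {q : ℕ} (hq : 1 < q) (m K : ℕ) : Prk q m K K = Pfr q m K := by
  have hg : gaussBinom q K K = 1 := by
    refine Finset.prod_eq_one fun i hi => div_self ?_
    have hi : i < K := Finset.mem_range.1 hi
    have : 1 < (q : ℝ) ^ (K - i) := one_lt_pow₀ (by exact_mod_cast hq) (by omega)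
    linarith
  simp [Prk, Pfr, hg]

/-- One step of the rank chain, tested against an arbitrary function of the rank. -/
lemma sum_Prk_succ_mul {q : ℕ} (hq : 1 < q) (m K : ℕ) (h : ℕ → ℝ) :
    ∑ i ∈ Finset.range (K + 1), Prk q (m + 1) K i * h i =
      ∑ i ∈ Finset.range (K + 1), Prk q m K i *
        ((q : ℝ) ^ ((i : ℤ) - (K : ℤ)) * h i +
          (1 - (q : ℝ) ^ ((i : ℤ) - (K : ℤ))) * h (i + 1)) := by
  have hL : ∑ i ∈ Finset.range (K + 1), Prk q (m + 1) K i * h i =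
      ∑ i ∈ Finset.range (K + 1), Prk q m K i * (q : ℝ) ^ ((i : ℤ) - (K : ℤ)) * h i +
        ∑ i ∈ Finset.range K,
          Prk q m K i * (1 - (q : ℝ) ^ ((i : ℤ) - (K : ℤ))) * h (i + 1) := by
    rw [Finset.sum_range_succ', Finset.sum_range_succ'
      (fun i => Prk q m K i * (q : ℝ) ^ ((i : ℤ) - (K : ℤ)) * h i), Prk_succ_zero hq,
      add_right_comm, ← Finset.sum_add_distrib]
    congr 1
    · refine Finset.sum_congr rfl fun i hi => ?_
      rw [Prk_succ_succ hq m (Finset.mem_range.1 hi)]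
      ring
    · simp
  have hR : ∑ i ∈ Finset.range K,
      Prk q m K i * (1 - (q : ℝ) ^ ((i : ℤ) - (K : ℤ))) * h (i + 1) =
      ∑ i ∈ Finset.range (K + 1),
        Prk q m K i * (1 - (q : ℝ) ^ ((i : ℤ) - (K : ℤ))) * h (i + 1) := by
    rw [Finset.sum_range_succ]
    simp
  rw [hL, hR, ← Finset.sum_add_distrib]
  exact Finset.sum_congr rfl fun i _ => by ring

/-- The summation bounds in `P2` only discard vanishing terms. -/
lemma P2_eq_sum_range (q K m' n mD : ℕ) :
    P2 q K (m' + mD) (n + mD) mD =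
      ∑ i ∈ Finset.range (K + 1), Prk q mD K i * (Pfr q n (K - i) * Pfr q m' (K - i)) := by
  unfold P2
  simp only [Nat.add_sub_cancel]
  refine Finset.sum_subset_zero_on_sdiff ?_ ?_ ?_
  · intro i hi
    simp only [Finset.mem_Icc, Finset.mem_range] at hi ⊢
    omega
  · intro i hi
    simp only [Finset.mem_sdiff, Finset.mem_Icc, Finset.mem_range] at hi
    rcases lt_or_ge mD i with h | h
    · rw [Prk_eq_zero h, zero_mul]
    · rcases lt_or_ge m' (K - i) with h' | h'
      · rw [Pfr_eq_zero h', mul_zero, mul_zero]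
      · rw [Pfr_eq_zero (show n < K - i by omega), zero_mul, mul_zero]
  · intro i _
    ring

lemma P2_eq_zero {q K m' n mD : ℕ} (h : m' + mD < K ∨ n + mD < K) :
    P2 q K (m' + mD) (n + mD) mD = 0 := by
  unfold P2
  rw [Finset.Icc_eq_empty (by omega), Finset.sum_empty]

end Algebra

section Combinatorics

lemma sum_filter_true_eq_sum_finset {ι M : Type*} [Fintype ι] [DecidableEq ι] [AddCommMonoid M]
    (f : Finset ι → M) :
    ∑ b : ι → Bool, f (Finset.univ.filter fun i => b i = true) = ∑ s : Finset ι, f s := by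
  refine Finset.sum_nbij' (fun b => Finset.univ.filter fun i => b i = true)
    (fun s i => decide (i ∈ s)) ?_ ?_ ?_ ?_ ?_ <;> simp

lemma prod_ite_eq_pow_mul_pow {ι : Type*} [Fintype ι] (b : ι → Bool) (x y : ℝ) :
    ∏ i, (if b i then x else y) =
      x ^ (Finset.univ.filter fun i => b i = true).card *
        y ^ (Fintype.card ι - (Finset.univ.filter fun i => b i = true).card) := by
  classical
  rw [Finset.prod_ite, Finset.prod_const, Finset.prod_const]
  congr 2
  rw [Finset.filter_not, Finset.card_sdiff_of_subset (Finset.subset_univ _), Finset.card_univ]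

lemma sum_finset_card {ι : Type*} [Fintype ι] [DecidableEq ι] (f : ℕ → ℝ) :
    ∑ s : Finset ι, f s.card =
      ∑ j ∈ Finset.range (Fintype.card ι + 1), ((Fintype.card ι).choose j : ℝ) * f j := by
  rw [← Finset.powerset_univ, Finset.sum_powerset_apply_card, Finset.card_univ]
  simp

/-- Summing over all `t` a function of `|t ∩ s|` and `|t \ s|`. -/
lemma sum_finset_card_inter_card_sdiff {ι : Type*} [Fintype ι] [DecidableEq ι] (s : Finset ι)
    (f : ℕ → ℕ → ℝ) :
    ∑ t : Finset ι, f (t ∩ s).card (t \ s).card =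
      ∑ j ∈ Finset.range (s.card + 1), (s.card.choose j : ℝ) *
        ∑ k ∈ Finset.range (Fintype.card ι - s.card + 1),
          ((Fintype.card ι - s.card).choose k : ℝ) * f j k := by
  have h1 : ∑ t : Finset ι, f (t ∩ s).card (t \ s).card =
      ∑ p ∈ s.powerset ×ˢ sᶜ.powerset, f p.1.card p.2.card := by
    refine Finset.sum_nbij' (fun t => (t ∩ s, t \ s)) (fun p => p.1 ∪ p.2) ?_ ?_ ?_ ?_ ?_
    · intro t _
      simp only [Finset.mem_product, Finset.mem_powerset]
      refine ⟨Finset.inter_subset_right, fun i hi => ?_⟩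
      simpa using (Finset.mem_sdiff.1 hi).2
    · simp
    · intro t _
      ext i
      simp only [Finset.mem_union, Finset.mem_inter, Finset.mem_sdiff]
      tauto
    · rintro ⟨u, v⟩ h
      simp only [Finset.mem_product, Finset.mem_powerset] at h
      have hu : ∀ i, i ∈ u → i ∈ s := fun i hi => h.1 hi
      have hv : ∀ i, i ∈ v → i ∉ s := fun i hi => by simpa using h.2 hi
      ext i <;> simp only [Finset.mem_union, Finset.mem_inter, Finset.mem_sdiff] <;>
        have := hu i <;> have := hv i <;> tauto
    · simp
  rw [h1, Finset.sum_product, ← Finset.card_compl]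
  have h2 : ∀ u : Finset ι, ∑ v ∈ sᶜ.powerset, f u.card v.card =
      ∑ k ∈ Finset.range (sᶜ.card + 1), (sᶜ.card.choose k : ℝ) * f u.card k := fun u => by
    rw [Finset.sum_powerset_apply_card (f u.card)]
    simp only [nsmul_eq_mul]
  simp only [h2]
  rw [Finset.sum_powerset_apply_card (fun j => ∑ k ∈ Finset.range (sᶜ.card + 1),
    (sᶜ.card.choose k : ℝ) * f j k)]
  simp only [nsmul_eq_mul]

/-- The joint law of the sizes of two reception sets and of their intersection. -/
lemma sum_reception_patterns (NS : ℕ) (εSR εSD : ℝ) (f : ℕ → ℕ → ℕ → ℝ) :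
    ∑ b : Fin NS → Bool, ∑ a : Fin NS → Bool,
      (∏ i, (if b i then (1 - εSD) else εSD)) * (∏ i, (if a i then (1 - εSR) else εSR)) *
        f (Finset.univ.filter fun i => a i = true).card
          (Finset.univ.filter fun i => b i = true).card
          ((Finset.univ.filter fun i => b i = true) ∩
            (Finset.univ.filter fun i => a i = true)).card =
      ∑ m ∈ Finset.range (NS + 1), ∑ mD ∈ Finset.range (NS + 1),
        ∑ mRD ∈ Finset.Icc (m + mD - NS) (min m mD),
          alphaRF NS εSR εSD m mD mRD * f m mD mRD := by
  rw [Finset.sum_comm]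
  simp_rw [prod_ite_eq_pow_mul_pow, Fintype.card_fin]
  let g : Finset (Fin NS) → Finset (Fin NS) → ℝ := fun s t =>
    (1 - εSD) ^ t.card * εSD ^ (NS - t.card) * ((1 - εSR) ^ s.card * εSR ^ (NS - s.card)) *
      f s.card t.card (t ∩ s).card
  have h1 := sum_filter_true_eq_sum_finset (fun s : Finset (Fin NS) => ∑ t, g s t)
  have h2 : ∀ s, _ := fun s => sum_filter_true_eq_sum_finset (g s)
  simp_rw [← h2] at h1
  refine h1.trans ?_
  simp_rw [h2]
  have h3 : ∀ s : Finset (Fin NS), ∑ t, g s t = ∑ j ∈ Finset.range (s.card + 1),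
      (s.card.choose j : ℝ) * ∑ k ∈ Finset.range (NS - s.card + 1),
        ((NS - s.card).choose k : ℝ) *
          ((1 - εSD) ^ (j + k) * εSD ^ (NS - (j + k)) *
            ((1 - εSR) ^ s.card * εSR ^ (NS - s.card)) * f s.card (j + k) j) := by
    intro s
    have := sum_finset_card_inter_card_sdiff s (fun j k =>
      (1 - εSD) ^ (j + k) * εSD ^ (NS - (j + k)) *
        ((1 - εSR) ^ s.card * εSR ^ (NS - s.card)) * f s.card (j + k) j)
    simpa only [Finset.card_inter_add_card_sdiff, Fintype.card_fin] using this
  simp_rw [h3]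
  rw [sum_finset_card (fun m => ∑ j ∈ Finset.range (m + 1),
      (m.choose j : ℝ) * ∑ k ∈ Finset.range (NS - m + 1),
        ((NS - m).choose k : ℝ) *
          ((1 - εSD) ^ (j + k) * εSD ^ (NS - (j + k)) *
            ((1 - εSR) ^ m * εSR ^ (NS - m)) * f m (j + k) j)), Fintype.card_fin]
  refine Finset.sum_congr rfl fun m hm => ?_
  have hm : m ≤ NS := Nat.lt_succ_iff.1 (Finset.mem_range.1 hm)
  simp_rw [Finset.mul_sum]
  rw [Finset.sum_sigma', Finset.sum_sigma']
  refine Finset.sum_nbij' (fun p => ⟨p.1 + p.2, p.1⟩) (fun p => ⟨p.2, p.1 - p.2⟩)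
    ?_ ?_ ?_ ?_ ?_
  · rintro ⟨j, k⟩ h
    simp only [Finset.mem_sigma, Finset.mem_range, Finset.mem_Icc] at h ⊢
    omega
  · rintro ⟨j, k⟩ h
    simp only [Finset.mem_sigma, Finset.mem_range, Finset.mem_Icc] at h ⊢
    omega
  · rintro ⟨j, k⟩ h
    simp
  · rintro ⟨j, k⟩ h
    simp only [Finset.mem_sigma, Finset.mem_range, Finset.mem_Icc] at h
    simp only [Sigma.mk.injEq, heq_eq_eq, and_true]
    omega
  · rintro ⟨j, k⟩ h
    simp only [Finset.mem_sigma, Finset.mem_range] at h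
    have hc : (NS.choose m : ℝ) * (m.choose j : ℝ) =
        (NS.choose j : ℝ) * ((NS - j).choose (m - j) : ℝ) := by
      exact_mod_cast Nat.choose_mul (by omega : j ≤ m)
    simp only [alphaRF, Nat.add_sub_cancel_left]
    rw [← hc]
    ring

/-- The number of packets received over a memoryless erasure channel is binomial. -/
lemma sum_erasure_pattern (N : ℕ) (ε : ℝ) (f : ℕ → ℝ) :
    ∑ d : Fin N → Bool, (∏ t, (if d t then (1 - ε) else ε)) *
        f (Finset.univ.filter fun t => d t = true).card =
      ∑ j ∈ Finset.range (N + 1), Bpmf j N ε * f j := by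
  simp_rw [prod_ite_eq_pow_mul_pow, Fintype.card_fin]
  rw [sum_filter_true_eq_sum_finset
    (fun s : Finset (Fin N) => (1 - ε) ^ s.card * ε ^ (N - s.card) * f s.card),
    sum_finset_card (fun j => (1 - ε) ^ j * ε ^ (N - j) * f j), Fintype.card_fin]
  refine Finset.sum_congr rfl fun j _ => ?_
  unfold Bpmf
  ring

end Combinatorics

section LinearAlgebra

open Module Submodule

/-- A surjective additive homomorphism pushes the uniform distribution to the uniform one. -/
lemma expect_comp_surjective {A B : Type*} [AddGroup A] [AddGroup B] [Fintype A] [Fintype B]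
    (φ : A →+ B) (hφ : Function.Surjective φ) (f : B → ℝ) :
    𝔼 a, f (φ a) = 𝔼 b, f b := by
  classical
  have hfib : ∀ b, (Finset.univ.filter fun a => φ a = b).card =
      (Finset.univ.filter fun a => φ a = 0).card := fun b =>
    AddMonoidHom.card_fiber_eq_of_mem_range φ (hφ b) (hφ 0)
  set c := (Finset.univ.filter fun a => φ a = 0).card
  have hsum : ∀ g : B → ℝ, ∑ a, g (φ a) = c * ∑ b, g b := by
    intro g
    rw [← Finset.sum_fiberwise Finset.univ φ, Finset.mul_sum]
    refine Finset.sum_congr rfl fun b _ => ?_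
    rw [Finset.sum_congr rfl (g := fun _ => g b)
      (fun a ha => by rw [(Finset.mem_filter.1 ha).2]), Finset.sum_const, hfib, nsmul_eq_mul]
  have hcard : (Fintype.card A : ℝ) = c * Fintype.card B := by
    simpa using hsum fun _ => 1
  have hc : (c : ℝ) ≠ 0 := by
    intro h
    rw [h, zero_mul] at hcard
    exact Fintype.card_ne_zero (by exact_mod_cast hcard)
  rw [Fintype.expect_eq_sum_div_card, Fintype.expect_eq_sum_div_card, hsum, hcard,
    mul_div_mul_left _ _ hc]

/-- A family spans `V` together with `W` iff its image spans `V ⧸ W`. -/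
lemma sup_span_range_eq_top_iff {F V τ : Type*} [Field F] [AddCommGroup V]
    [Module F V] (W : Submodule F V) (y : τ → V) :
    W ⊔ span F (Set.range y) = ⊤ ↔ span F (Set.range fun t => W.mkQ (y t)) = ⊤ := by
  rw [← map_mkQ_eq_top, Submodule.map_span, ← Set.range_comp]
  rfl

variable {F V : Type*} [Field F] [Fintype F] [AddCommGroup V] [Module F V] [Fintype V]

/-- Effect on the dimension of adjoining a uniformly random vector to a subspace. -/
lemma expect_finrank_sup_span_singleton (W : Submodule F V) (h : ℕ → ℝ) :
    𝔼 v : V, h (finrank F (W ⊔ span F {v} : Submodule F V)) =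
      (Fintype.card F : ℝ) ^ ((finrank F W : ℤ) - (finrank F V : ℤ)) * h (finrank F W) +
        (1 - (Fintype.card F : ℝ) ^ ((finrank F W : ℤ) - (finrank F V : ℤ))) *
          h (finrank F W + 1) := by
  classical
  have hF0 : (Fintype.card F : ℝ) ≠ 0 := by exact_mod_cast Fintype.card_ne_zero
  have hval : ∀ v : V, h (finrank F (W ⊔ span F {v} : Submodule F V)) =
      (if v ∈ W then h (finrank F W) - h (finrank F W + 1) else 0) + h (finrank F W + 1) := by
    intro v
    split_ifs with hv
    · rw [sup_eq_left.2 (by simpa using hv)]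
      ring
    · rw [finrank_sup_span_singleton hv, zero_add]
  have hW : ((Finset.univ.filter fun v => v ∈ W).card : ℝ) =
      (Fintype.card F : ℝ) ^ finrank F W := by
    rw [← Fintype.card_subtype]
    exact_mod_cast Module.card_eq_pow_finrank (K := F) (V := W)
  have hV : (Fintype.card V : ℝ) = (Fintype.card F : ℝ) ^ finrank F V := by
    exact_mod_cast Module.card_eq_pow_finrank (K := F) (V := V)
  simp_rw [hval]
  rw [Finset.expect_add_distrib, Fintype.expect_const, Fintype.expect_eq_sum_div_card,
    Finset.sum_ite, Finset.sum_const, Finset.sum_const_zero, add_zero, nsmul_eq_mul, hW, hV,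
    zpow_sub₀ hF0, zpow_natCast, zpow_natCast]
  ring

/-- The law of the dimension of the span of uniformly random vectors. -/
lemma expect_finrank_span_range_fin (m : ℕ) (h : ℕ → ℝ) :
    𝔼 c : Fin m → V, h (finrank F (span F (Set.range c))) =
      ∑ i ∈ Finset.range (finrank F V + 1),
        Prk (Fintype.card F) m (finrank F V) i * h i := by
  induction m generalizing h with
  | zero =>
    rw [Finset.sum_eq_single_of_mem 0 (by simp)
      (fun i _ hi => by rw [Prk_eq_zero (Nat.pos_of_ne_zero hi), zero_mul])]
    have hspan : ∀ c : Fin 0 → V, finrank F (span F (Set.range c)) = 0 := fun c => by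
      rw [Set.range_eq_empty, span_empty, finrank_bot]
    simp only [hspan, Fintype.expect_const, Prk_zero_right]
    simp
  | succ m ih =>
    rw [sum_Prk_succ_mul Fintype.one_lt_card, ← ih,
      ← Fintype.expect_equiv (Fin.consEquiv fun _ : Fin (m + 1) => V)
        (fun p => h (finrank F (span F (Set.range (Fin.cons p.1 p.2 : Fin (m + 1) → V)))))
        _ (fun _ => rfl), ← Finset.univ_product_univ, Finset.expect_product, Finset.expect_comm]
    refine Finset.expect_congr rfl fun c _ => ?_
    rw [← expect_finrank_sup_span_singleton (span F (Set.range c)) h]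
    refine Finset.expect_congr rfl fun v _ => ?_
    rw [Fin.range_cons, Submodule.span_insert, sup_comm]

lemma expect_finrank_span_range {β : Type*} [Fintype β] [DecidableEq β] (h : ℕ → ℝ) :
    𝔼 c : β → V, h (finrank F (span F (Set.range c))) =
      ∑ i ∈ Finset.range (finrank F V + 1),
        Prk (Fintype.card F) (Fintype.card β) (finrank F V) i * h i := by
  rw [← expect_finrank_span_range_fin]
  refine Fintype.expect_equiv (Equiv.arrowCongr (Fintype.equivFin β) (Equiv.refl V)) _ _ ?_
  intro c
  have : Set.range (Equiv.arrowCongr (Fintype.equivFin β) (Equiv.refl V) c) = Set.range c :=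
    (Fintype.equivFin β).symm.surjective.range_comp c
  rw [this]

open Classical in
/-- The probability that uniformly random vectors span the whole space. -/
lemma expect_span_range_eq_top {β : Type*} [Fintype β] [DecidableEq β] :
    𝔼 c : β → V, (if span F (Set.range c) = ⊤ then (1 : ℝ) else 0) =
      Pfr (Fintype.card F) (Fintype.card β) (finrank F V) := by
  have h := expect_finrank_span_range (F := F) (V := V) (β := β)
    (fun i => if i = finrank F V then (1 : ℝ) else 0)
  simp only [mul_ite, mul_one, mul_zero, Finset.sum_ite_eq', Finset.mem_range,
    Nat.lt_succ_self, if_true, Prk_self Fintype.one_lt_card] at h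
  rw [← h]
  refine Finset.expect_congr rfl fun c _ => if_congr ?_ rfl rfl
  exact ⟨fun h => by rw [h, finrank_top], Submodule.eq_top_of_finrank_eq⟩

open Classical in
/-- The probability that random combinations of random vectors span the whole space. -/
lemma expect_span_range_sum_smul_eq_top {ι τ : Type*} [Fintype ι] [DecidableEq ι] [Fintype τ]
    [DecidableEq τ] :
    𝔼 x : ι → V, 𝔼 g : τ → ι → F,
        (if span F (Set.range fun t => ∑ i, g t i • x i) = ⊤ then (1 : ℝ) else 0) =
      Pfr (Fintype.card F) (Fintype.card ι) (finrank F V) *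
        Pfr (Fintype.card F) (Fintype.card τ) (finrank F V) := by
  have key : ∀ x : ι → V, 𝔼 g : τ → ι → F,
        (if span F (Set.range fun t => ∑ i, g t i • x i) = ⊤ then (1 : ℝ) else 0) =
      (if span F (Set.range x) = ⊤ then (1 : ℝ) else 0) *
        Pfr (Fintype.card F) (Fintype.card τ) (finrank F V) := by
    intro x
    split_ifs with hx
    · have hsurj : Function.Surjective (Fintype.linearCombination F x) := by
        rw [← LinearMap.range_eq_top, Fintype.range_linearCombination, hx]
      rw [one_mul, ← expect_span_range_eq_top (F := F)]
      exact expect_comp_surjective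
        ((Fintype.linearCombination F x).toAddMonoidHom.compLeft τ) hsurj.comp_left
        (fun y => if span F (Set.range y) = ⊤ then (1 : ℝ) else 0)
    · rw [zero_mul]
      refine Finset.expect_eq_zero fun g _ => if_neg fun h => hx ?_
      rw [eq_top_iff, ← h, span_le]
      rintro _ ⟨t, rfl⟩
      exact sum_mem fun i _ => smul_mem _ _ (subset_span ⟨i, rfl⟩)
  simp_rw [key]
  rw [← Finset.expect_mul, expect_span_range_eq_top]

open Classical in
lemma expect_sup_span_range_sum_smul_eq_top {ι τ : Type*} [Fintype ι] [DecidableEq ι] [Fintype τ]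
    [DecidableEq τ]
    (W : Submodule F V) :
    𝔼 x : ι → V, 𝔼 g : τ → ι → F,
        (if span F (Set.range fun t => ∑ i, g t i • W.mkQ (x i)) = ⊤ then (1 : ℝ) else 0) =
      Pfr (Fintype.card F) (Fintype.card ι) (finrank F V - finrank F W) *
        Pfr (Fintype.card F) (Fintype.card τ) (finrank F V - finrank F W) := by
  have := Fintype.ofFinite (V ⧸ W)
  rw [← Submodule.finrank_quotient, ← expect_span_range_sum_smul_eq_top]
  exact expect_comp_surjective (W.mkQ.toAddMonoidHom.compLeft ι) W.mkQ_surjective.comp_left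
    (fun x => 𝔼 g : τ → ι → F,
      (if span F (Set.range fun t => ∑ i, g t i • x i) = ⊤ then (1 : ℝ) else 0))

end LinearAlgebra

section Decoding

open Module Submodule

variable {F R T : Type*} [Field F] [Fintype R] [Fintype T]

/-- The coefficient matrix collected by the destination: the source packets in `b` stacked on
the packets in `d` recoded by a relay holding the source packets in `a`. -/
abbrev destMatrix {K : ℕ} (b a : R → Bool) (d : T → Bool) (C : Matrix R (Fin K) F)
    (G : Matrix T R F) : Matrix ({i // b i = true} ⊕ {t // d t = true}) (Fin K) F :=
  Matrix.of (Sum.elim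
    (fun (i : {i : R // b i = true}) (k : Fin K) => C i.1 k)
    (fun (t : {t : T // d t = true}) (k : Fin K) =>
      ∑ i : {i : R // a i = true}, G t.1 i.1 * C i.1 k))

/-- Decoding succeeds iff the relay packets span the space modulo the packets received
directly; the source packets known to both terminals do not contribute. -/
lemma rank_destMatrix_eq_iff {K : ℕ} (b a : R → Bool) (d : T → Bool) (C : Matrix R (Fin K) F)
    (G : Matrix T R F) :
    (destMatrix b a d C G).rank = K ↔
      span F (Set.range fun t : {t // d t = true} =>
        ∑ i : {i // a i = true ∧ b i = false}, G t.1 i.1 •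
          (span F (Set.range fun j : {j // b j = true} => C j.1)).mkQ (C i.1)) = ⊤ := by
  set W := span F (Set.range fun j : {j // b j = true} => C j.1) with hW
  have hrow : Set.range (destMatrix b a d C G).row =
      (Set.range fun j : {j // b j = true} => C j.1) ∪
        Set.range fun t : {t // d t = true} =>
          ∑ i : {i // a i = true}, G t.1 i.1 • C i.1 := by
    have : (destMatrix b a d C G).row = Sum.elim (fun j : {j // b j = true} => C j.1)
        (fun t : {t // d t = true} => ∑ i : {i // a i = true}, G t.1 i.1 • C i.1) := by
      ext (i | t) k
      · rfl
      · simp [Matrix.row, Finset.sum_apply]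
    rw [this, Set.Sum.elim_range]
  have hsum : ∀ t : {t // d t = true},
      W.mkQ (∑ i : {i // a i = true}, G t.1 i.1 • C i.1) =
        ∑ i : {i // a i = true ∧ b i = false}, G t.1 i.1 • W.mkQ (C i.1) := by
    intro t
    simp only [map_sum, map_smul]
    rw [← Finset.sum_subtype (Finset.univ.filter fun i => a i = true) (by simp)
      (fun i => G t.1 i • W.mkQ (C i)),
      ← Finset.sum_subtype (Finset.univ.filter fun i => a i = true ∧ b i = false) (by simp)
      (fun i => G t.1 i • W.mkQ (C i))]
    symm
    refine Finset.sum_subset (fun i hi => ?_) (fun i hi hi' => ?_)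
    · simp only [Finset.mem_filter, Finset.mem_univ, true_and] at hi ⊢
      exact hi.1
    · have hb : b i = true := by
        simp only [Finset.mem_filter, Finset.mem_univ, true_and] at hi hi'
        simpa [hi] using hi'
      have : C i ∈ W := subset_span ⟨⟨i, hb⟩, rfl⟩
      rw [mkQ_apply, (Submodule.Quotient.mk_eq_zero W).2 this, smul_zero]
  simp only [← hsum]
  rw [← sup_span_range_eq_top_iff, hW, ← span_union, ← hrow, Matrix.rank_eq_finrank_span_row]
  refine ⟨fun h => eq_top_of_finrank_eq (by rw [h, finrank_fin_fun]), fun h => ?_⟩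
  rw [h, finrank_top, finrank_fin_fun]

/-- The restrictions of a uniformly random family to disjoint index sets are independent and
uniformly random. -/
lemma expect_restrict_disjoint {V : Type*} [AddGroup V] [Fintype V] [DecidableEq R]
    (p q : R → Prop) [DecidablePred p] [DecidablePred q] (hpq : ∀ i, p i → ¬ q i)
    (f : ({i // p i} → V) → ({i // q i} → V) → ℝ) :
    𝔼 C : R → V, f (fun i => C i.1) (fun i => C i.1) = 𝔼 c, 𝔼 x, f c x := by
  let restrict : (R → V) →+ ({i // p i} → V) × ({i // q i} → V) :=
    { toFun := fun C => (fun i => C i.1, fun i => C i.1)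
      map_zero' := rfl
      map_add' := fun _ _ => rfl }
  have hsurj : Function.Surjective restrict := fun y =>
    ⟨fun i => if h : p i then y.1 ⟨i, h⟩ else if h : q i then y.2 ⟨i, h⟩ else 0,
      Prod.ext (funext fun i => dif_pos i.2)
        (funext fun i => (dif_neg fun h => hpq _ h i.2).trans (dif_pos i.2))⟩
  refine (expect_comp_surjective restrict hsurj fun y => f y.1 y.2).trans ?_
  rw [← Finset.univ_product_univ, Finset.expect_product]

/-- A submatrix of a uniformly random matrix is uniformly random. -/
lemma expect_restrict_entries [Fintype F] [DecidableEq R] [DecidableEq T]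
    (p : T → Prop) (q : R → Prop) [DecidablePred p] [DecidablePred q]
    (f : ({t // p t} → {i // q i} → F) → ℝ) :
    𝔼 G : T → R → F, f (fun t i => G t.1 i.1) = 𝔼 g, f g := by
  let restrict : (T → R → F) →+ ({t // p t} → {i // q i} → F) :=
    { toFun := fun G t i => G t.1 i.1
      map_zero' := rfl
      map_add' := fun _ _ => rfl }
  have hsurj : Function.Surjective restrict := fun g =>
    ⟨fun t i => if h : p t ∧ q i then g ⟨t, h.1⟩ ⟨i, h.2⟩ else 0,
      funext fun t => funext fun i => dif_pos ⟨t.2, i.2⟩⟩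
  exact expect_comp_surjective restrict hsurj f

open Classical in
/-- The decoding probability for fixed reception patterns. -/
lemma expect_rank_destMatrix [Fintype F] [DecidableEq R] [DecidableEq T] (K : ℕ)
    (b a : R → Bool) (d : T → Bool) :
    𝔼 C : Matrix R (Fin K) F, 𝔼 G : Matrix T R F,
        (if (destMatrix b a d C G).rank = K then (1 : ℝ) else 0) =
      P2 (Fintype.card F) K
        (Fintype.card {t // d t = true} + Fintype.card {i // b i = true})
        (Fintype.card {i // a i = true ∧ b i = false} + Fintype.card {i // b i = true})
        (Fintype.card {i // b i = true}) := by
  rw [P2_eq_sum_range]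
  let ind : ({i // b i = true} → Fin K → F) → ({i // a i = true ∧ b i = false} → Fin K → F) →
      ({t // d t = true} → {i // a i = true ∧ b i = false} → F) → ℝ := fun c x g =>
    if span F (Set.range fun t => ∑ i, g t i • (span F (Set.range c)).mkQ (x i)) = ⊤
      then (1 : ℝ) else 0
  calc
    _ = 𝔼 C : R → Fin K → F, 𝔼 G : T → R → F,
          ind (fun i => C i.1) (fun i => C i.1) (fun t i => G t.1 i.1) :=
      Finset.expect_congr rfl fun C _ => Finset.expect_congr rfl fun G _ =>
        if_congr (rank_destMatrix_eq_iff b a d C G) rfl rfl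
    _ = 𝔼 C : R → Fin K → F, 𝔼 g, ind (fun i => C i.1) (fun i => C i.1) g :=
      Finset.expect_congr rfl fun C _ => expect_restrict_entries _ _ _
    _ = 𝔼 c, 𝔼 x, 𝔼 g, ind c x g :=
      expect_restrict_disjoint _ _ (fun i hb hab => by simp [hb] at hab)
        fun c x => 𝔼 g, ind c x g
    _ = _ := by
      have hc : ∀ c, 𝔼 x, 𝔼 g, ind c x g = _ := fun c =>
        expect_sup_span_range_sum_smul_eq_top (span F (Set.range c))
      simp_rw [hc, finrank_fin_fun]
      have := expect_finrank_span_range (F := F) (V := Fin K → F) (β := {i // b i = true})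
        (fun r => Pfr (Fintype.card F) (Fintype.card {i // a i = true ∧ b i = false}) (K - r) *
          Pfr (Fintype.card F) (Fintype.card {t // d t = true}) (K - r))
      rw [finrank_fin_fun] at this
      exact this

end Decoding

/-- the RF single-relay model (`L = 1`). Sample space: `C` a uniformly
random `N_S × K` matrix over a finite field with `q` elements; `b` the destination
reception pattern from the source (row `i` received w.p. `1-ε_SD`); `a` the relay
reception pattern (w.p. `1-ε_SR`); `G` the relay recoding matrix (realised as a
uniformly random `N_R × N_S` matrix, only the columns of received packets being
used); `d` the destination reception pattern from the relay (w.p. `1-ε_RD`).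
The destination matrix `C_D` stacks `C_B` and `(G)_D · C_A`; decoding succeeds iff
`rank C_D = K`. The probability of successful decoding equals
`∑ α(m,m_D,m_RD) ∑_{m'=max(0,K-m_D)}^{N_R} B(m',N_R,ε_RD) P2((m'+m_D, m-m_RD+m_D, m_D), K)`,
the outer sum over `0 ≤ m, m_D ≤ N_S` with `m + m_D ≥ K` and
`max(0, m+m_D-N_S) ≤ m_RD ≤ min(m, m_D)`. -/
theorem rf_single_relay_decoding_prob (q : ℕ) (F : Type) [Field F] [Fintype F]
    [DecidableEq F] (hF : Fintype.card F = q) (K NS NR : ℕ) (hK : 1 ≤ K) (hNS : K ≤ NS)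
    (εSD εSR εRD : ℝ) (hSD : εSD ∈ Set.Icc (0:ℝ) 1) (hSR : εSR ∈ Set.Icc (0:ℝ) 1)
    (hRD : εRD ∈ Set.Icc (0:ℝ) 1) :
    ∑ ω ∈ Finset.univ.filter
        (fun ω : Matrix (Fin NS) (Fin K) F × (Fin NS → Bool) × (Fin NS → Bool) ×
            Matrix (Fin NR) (Fin NS) F × (Fin NR → Bool) =>
          ((Matrix.of (Sum.elim
              (fun (i : {i : Fin NS // ω.2.1 i = true}) (k : Fin K) => ω.1 i.1 k)
              (fun (t : {t : Fin NR // ω.2.2.2.2 t = true}) (k : Fin K) =>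
                ∑ i : {i : Fin NS // ω.2.2.1 i = true},
                  ω.2.2.2.1 t.1 i.1 * ω.1 i.1 k))).rank = K)),
      ((Fintype.card (Matrix (Fin NS) (Fin K) F) : ℝ))⁻¹ *
      ((Fintype.card (Matrix (Fin NR) (Fin NS) F) : ℝ))⁻¹ *
      (∏ i : Fin NS, (if ω.2.1 i then (1 - εSD) else εSD)) *
      (∏ i : Fin NS, (if ω.2.2.1 i then (1 - εSR) else εSR)) *
      (∏ t : Fin NR, (if ω.2.2.2.2 t then (1 - εRD) else εRD)) =
    ∑ m ∈ Finset.range (NS + 1), ∑ mD ∈ Finset.range (NS + 1),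
      (if K ≤ m + mD then
        ∑ mRD ∈ Finset.Icc (m + mD - NS) (min m mD),
          alphaRF NS εSR εSD m mD mRD *
            ∑ m' ∈ Finset.Icc (K - mD) NR,
              Bpmf m' NR εRD * P2 q K (m' + mD) (m - mRD + mD) mD
       else 0) := by
  subst hF
  set q := Fintype.card F
  let mem : (Fin NS → Bool) → Finset (Fin NS) := fun b => Finset.univ.filter fun i => b i = true
  have hexp : ∀ (b a : Fin NS → Bool) (d : Fin NR → Bool),
      ((Fintype.card (Matrix (Fin NS) (Fin K) F) : ℝ))⁻¹ *
        ((Fintype.card (Matrix (Fin NR) (Fin NS) F) : ℝ))⁻¹ *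
        ∑ C : Matrix (Fin NS) (Fin K) F, ∑ G : Matrix (Fin NR) (Fin NS) F,
          (if (destMatrix b a d C G).rank = K then (1 : ℝ) else 0) =
      P2 q K ((Finset.univ.filter fun t => d t = true).card + (mem b).card)
        ((mem a).card - (mem b ∩ mem a).card + (mem b).card) (mem b).card := by
    intro b a d
    have hdiff : Fintype.card {i // a i = true ∧ b i = false} =
        (mem a).card - (mem b ∩ mem a).card := by
      rw [← Finset.card_sdiff, Fintype.card_subtype]
      congr 1
      ext i
      simp [mem]
    have h := expect_rank_destMatrix (F := F) K b a d
    rw [hdiff, Fintype.card_subtype, Fintype.card_subtype] at h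
    rw [← h]
    simp_rw [Fintype.expect_eq_sum_div_card, ← Finset.sum_div]
    ring
  calc
    _ = ∑ b : Fin NS → Bool, ∑ a : Fin NS → Bool, ∑ d : Fin NR → Bool,
        (∏ i, (if b i then (1 - εSD) else εSD)) * (∏ i, (if a i then (1 - εSR) else εSR)) *
        ((∏ t, (if d t then (1 - εRD) else εRD)) *
          (((Fintype.card (Matrix (Fin NS) (Fin K) F) : ℝ))⁻¹ *
            ((Fintype.card (Matrix (Fin NR) (Fin NS) F) : ℝ))⁻¹ *
            ∑ C : Matrix (Fin NS) (Fin K) F, ∑ G : Matrix (Fin NR) (Fin NS) F,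
              (if (destMatrix b a d C G).rank = K then (1 : ℝ) else 0))) := by
      rw [Finset.sum_filter]
      simp_rw [Fintype.sum_prod_type]
      rw [Finset.sum_comm]
      refine Finset.sum_congr rfl fun b _ => ?_
      rw [Finset.sum_comm]
      refine Finset.sum_congr rfl fun a _ => ?_
      simp_rw [Finset.mul_sum]
      rw [Finset.sum_comm (s := (Finset.univ : Finset (Fin NR → Bool)))]
      refine Finset.sum_congr rfl fun C _ => ?_
      rw [Finset.sum_comm]
      refine Finset.sum_congr rfl fun d _ => Finset.sum_congr rfl fun G _ => ?_
      rw [mul_ite, mul_ite, mul_ite, mul_one, mul_zero, mul_zero, mul_zero]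
      exact if_congr Iff.rfl (by ring) rfl
    _ = ∑ b : Fin NS → Bool, ∑ a : Fin NS → Bool,
        (∏ i, (if b i then (1 - εSD) else εSD)) * (∏ i, (if a i then (1 - εSR) else εSR)) *
          ∑ m' ∈ Finset.range (NR + 1), Bpmf m' NR εRD *
            P2 q K (m' + (mem b).card)
              ((mem a).card - (mem b ∩ mem a).card + (mem b).card) (mem b).card := by
      refine Finset.sum_congr rfl fun b _ => Finset.sum_congr rfl fun a _ => ?_
      rw [← Finset.mul_sum]
      simp_rw [hexp]
      rw [sum_erasure_pattern NR εRD (fun m' => P2 q K (m' + (mem b).card)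
        ((mem a).card - (mem b ∩ mem a).card + (mem b).card) (mem b).card)]
    _ = ∑ m ∈ Finset.range (NS + 1), ∑ mD ∈ Finset.range (NS + 1),
        ∑ mRD ∈ Finset.Icc (m + mD - NS) (min m mD), alphaRF NS εSR εSD m mD mRD *
          ∑ m' ∈ Finset.range (NR + 1),
            Bpmf m' NR εRD * P2 q K (m' + mD) (m - mRD + mD) mD :=
      sum_reception_patterns NS εSR εSD fun m mD mRD =>
        ∑ m' ∈ Finset.range (NR + 1), Bpmf m' NR εRD * P2 q K (m' + mD) (m - mRD + mD) mD
    _ = _ := by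
      refine Finset.sum_congr rfl fun m _ => Finset.sum_congr rfl fun mD _ => ?_
      split_ifs with hm
      · refine Finset.sum_congr rfl fun mRD _ => congrArg _ ?_
        symm
        refine Finset.sum_subset (fun m' h => ?_) (fun m' h h' => ?_)
        · simp only [Finset.mem_Icc, Finset.mem_range] at h ⊢
          omega
        · simp only [Finset.mem_Icc, Finset.mem_range] at h h'
          rw [P2_eq_zero (Or.inl (by omega)), mul_zero]
      · refine Finset.sum_eq_zero fun mRD _ => ?_
        rw [Finset.sum_eq_zero, mul_zero]
        intro m' _
        rw [P2_eq_zero (Or.inr (by omega)), mul_zero]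
end

section
/- In the RF relay model with L ≥ 1 relays, the probability of successful decoding is at most ∑ α(m, m_D, m_RD) · ∑ ∏_{j=1}^{L} B(m'_j, N_R, ε_RjD) · P2((m' + m_D, m − m_RD + m_D, m_D), K), where α(m, m_D, m_RD) = C(N_S, m_RD) · C(N_S − m_RD, m − m_RD) · C(N_S − m, m_D − m_RD) · (1−ε̃_SR)^m ε̃_SR^{N_S−m} (1−ε_SD)^{m_D} ε_SD^{N_S−m_D} with ε̃_SR = ∏_{j=1}^{L} ε_SRj; the outer sum is over integers m, m_D with 0 ≤ m, m_D ≤ N_S and m + m_D ≥ K, and m_RD with max(0, m + m_D − N_S) ≤ m_RD ≤ min(m, m_D); the inner sum is over integers m'_1, …, m'_L with 0 ≤ m'_j ≤ N_R and m' := ∑_{j=1}^{L} m'_j ≥ K − m_D. -/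
open Finset

section RankLaws

lemma pfr_zero (q m : ℕ) : Pfr q m 0 = 1 := by simp [Pfr]

lemma pfr_succ_right (q m k : ℕ) :
    Pfr q m (k + 1) = Pfr q m k * (1 - (q : ℝ) ^ ((k : ℤ) - (m : ℤ))) := by
  simp [Pfr, Finset.prod_range_succ]

lemma pfr_eq_zero_of_lt (q : ℕ) {m k : ℕ} (h : m < k) : Pfr q m k = 0 :=
  Finset.prod_eq_zero (Finset.mem_range.2 h) (by simp)

lemma pfr_factor_nonneg {q : ℕ} (hq : 2 ≤ q) {m i : ℕ} (h : i ≤ m) :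
    0 ≤ 1 - (q : ℝ) ^ ((i : ℤ) - (m : ℤ)) := by
  have hq1 : (1 : ℝ) ≤ q := by exact_mod_cast (by omega : 1 ≤ q)
  have := zpow_le_one_of_nonpos₀ hq1 (by omega : (i : ℤ) - (m : ℤ) ≤ 0)
  linarith

lemma pfr_nonneg {q : ℕ} (hq : 2 ≤ q) (m k : ℕ) : 0 ≤ Pfr q m k := by
  rcases lt_or_ge m k with h | h
  · rw [pfr_eq_zero_of_lt q h]
  · refine Finset.prod_nonneg fun i hi => pfr_factor_nonneg hq ?_
    have := Finset.mem_range.1 hi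
    omega

lemma pfr_succ_right_le {q : ℕ} (hq : 2 ≤ q) (m k : ℕ) : Pfr q m (k + 1) ≤ Pfr q m k := by
  rcases lt_or_ge m (k + 1) with h | h
  · rw [pfr_eq_zero_of_lt q h]
    exact pfr_nonneg hq m k
  · rw [pfr_succ_right]
    refine mul_le_of_le_one_right (pfr_nonneg hq m k) ?_
    have : (0 : ℝ) ≤ (q : ℝ) ^ ((k : ℤ) - (m : ℤ)) := by positivity
    linarith

lemma pfr_succ_succ (q m k : ℕ) :
    Pfr q (m + 1) (k + 1) = (1 - (q : ℝ) ^ (-1 - (m : ℤ))) * Pfr q m k := by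
  unfold Pfr
  rw [Finset.prod_range_succ', mul_comm]
  congr 1
  · push_cast
    congr 2
    ring
  · refine Finset.prod_congr rfl fun i _ => ?_
    push_cast
    congr 2
    ring

/-- Exposing one more uniform vector either leaves the codimension `k + 1` unchanged or
decreases it. -/
lemma pfr_succ_left {q : ℕ} (hq : 2 ≤ q) (m k : ℕ) :
    Pfr q (m + 1) (k + 1) = (q : ℝ) ^ (-(k + 1 : ℤ)) * Pfr q m (k + 1) +
      (1 - (q : ℝ) ^ (-(k + 1 : ℤ))) * Pfr q m k := by
  have hq0 : (q : ℝ) ≠ 0 := by positivity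
  have h : (q : ℝ) ^ (-1 - (m : ℤ)) =
      (q : ℝ) ^ (-(k + 1 : ℤ)) * (q : ℝ) ^ ((k : ℤ) - (m : ℤ)) := by
    rw [← zpow_add₀ hq0]
    congr 1
    ring
  rw [pfr_succ_succ, pfr_succ_right, h]
  ring

lemma gaussBinom_zero_right (q K : ℕ) : gaussBinom q K 0 = 1 := by simp [gaussBinom]

lemma gaussBinom_succ_right {q : ℕ} (hq : 2 ≤ q) (K r : ℕ) :
    gaussBinom q K (r + 1) * ((q : ℝ) ^ (r + 1) - 1) =
      gaussBinom q K r * ((q : ℝ) ^ (K - r) - 1) := by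
  have hne : ((q : ℝ) ^ (r + 1) - 1) ≠ 0 := by
    have : (1 : ℝ) < (q : ℝ) ^ (r + 1) :=
      one_lt_pow₀ (by exact_mod_cast (by omega : 1 < q)) (by omega)
    linarith
  unfold gaussBinom
  rw [Finset.prod_div_distrib, Finset.prod_div_distrib, Finset.prod_range_succ,
    Finset.prod_range_succ' (fun i => (q : ℝ) ^ (r + 1 - i) - 1)]
  simp only [Nat.add_sub_add_right, Nat.sub_zero]
  field_simp

lemma prk_eq (q m K r : ℕ) : Prk q m K r =
    (q : ℝ) ^ (-(m : ℤ) * ((K : ℤ) - (r : ℤ))) * gaussBinom q K r * Pfr q m r := rfl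

lemma prk_eq_zero_of_lt (q K : ℕ) {m r : ℕ} (h : m < r) : Prk q m K r = 0 := by
  rw [prk_eq, pfr_eq_zero_of_lt q h, mul_zero]

lemma prk_zero_zero (q K : ℕ) : Prk q 0 K 0 = 1 := by
  simp [Prk, gaussBinom]

lemma prk_succ_zero {q : ℕ} (hq : 2 ≤ q) (m K : ℕ) :
    Prk q (m + 1) K 0 = (q : ℝ) ^ (-(K : ℤ)) * Prk q m K 0 := by
  have hq0 : (q : ℝ) ≠ 0 := by positivity
  simp only [prk_eq, gaussBinom_zero_right, pfr_zero, mul_one]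
  rw [← zpow_add₀ hq0]
  congr 1
  push_cast
  ring

/-- Transition rule of the rank of a uniformly random matrix when a row is appended. -/
lemma prk_succ_succ {q : ℕ} (hq : 2 ≤ q) (m K r : ℕ) (hr : r + 1 ≤ K) :
    Prk q (m + 1) K (r + 1) =
      (q : ℝ) ^ ((r + 1 : ℤ) - (K : ℤ)) * Prk q m K (r + 1) +
        (1 - (q : ℝ) ^ ((r : ℤ) - (K : ℤ))) * Prk q m K r := by
  have hq0 : (q : ℝ) ≠ 0 := by positivity
  have hg := gaussBinom_succ_right hq K r
  rw [prk_eq, prk_eq, prk_eq, pfr_succ_succ, pfr_succ_right]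
  obtain ⟨d, rfl⟩ := Nat.exists_eq_add_of_le hr
  have e1 : r + 1 + d - r = d + 1 := by omega
  rw [e1] at hg
  generalize gaussBinom q (r + 1 + d) (r + 1) = g1 at *
  generalize gaussBinom q (r + 1 + d) r = g0 at *
  push_cast
  have a1 : (q : ℝ) ^ (-((m : ℤ) + 1) * ((r : ℤ) + 1 + d - (r + 1))) =
      ((q : ℝ) ^ (m * d))⁻¹ * ((q : ℝ) ^ d)⁻¹ := by
    rw [← zpow_natCast, ← zpow_natCast, ← zpow_neg, ← zpow_neg, ← zpow_add₀ hq0]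
    congr 1; push_cast; ring
  have a2 : (q : ℝ) ^ (-1 - (m : ℤ)) = (q : ℝ)⁻¹ * ((q : ℝ) ^ m)⁻¹ := by
    rw [sub_eq_add_neg, zpow_add₀ hq0]; simp
  have a3 : (q : ℝ) ^ ((r : ℤ) + 1 - (r + 1 + d)) = ((q : ℝ) ^ d)⁻¹ := by
    rw [← zpow_natCast, ← zpow_neg]; congr 1; ring
  have a4 : (q : ℝ) ^ (-(m : ℤ) * ((r : ℤ) + 1 + d - (r + 1))) = ((q : ℝ) ^ (m * d))⁻¹ := by
    rw [← zpow_natCast, ← zpow_neg]; congr 1; push_cast; ring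
  have a5 : (q : ℝ) ^ ((r : ℤ) - m) = (q : ℝ) ^ r * ((q : ℝ) ^ m)⁻¹ := by
    rw [sub_eq_add_neg, zpow_add₀ hq0]; simp
  have a6 : (q : ℝ) ^ ((r : ℤ) - (r + 1 + d)) = ((q : ℝ) ^ (d + 1))⁻¹ := by
    rw [← zpow_natCast, ← zpow_neg]; congr 1; push_cast; ring
  have a7 : (q : ℝ) ^ (-(m : ℤ) * ((r : ℤ) + 1 + d - r)) =
      ((q : ℝ) ^ (m * d))⁻¹ * ((q : ℝ) ^ m)⁻¹ := by
    rw [← zpow_natCast, ← zpow_natCast, ← zpow_neg, ← zpow_neg, ← zpow_add₀ hq0]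
    congr 1; push_cast; ring
  rw [a1, a2, a3, a4, a5, a6, a7]
  generalize Pfr q m r = P
  have hmd : (q : ℝ) ^ (m * d) ≠ 0 := by positivity
  have hm : (q : ℝ) ^ m ≠ 0 := by positivity
  have hd : (q : ℝ) ^ d ≠ 0 := by positivity
  rw [pow_succ, pow_succ] at hg
  rw [pow_succ]
  generalize (q : ℝ) ^ (m * d) = x at *
  generalize (q : ℝ) ^ m = y at *
  generalize (q : ℝ) ^ d = z at *
  field_simp
  linear_combination P * hg

/-- The lower summation bounds of `P2` only discard vanishing terms. -/
lemma p2_eq_sum_range (q K a b m : ℕ) :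
    P2 q K (a + m) (b + m) m =
      ∑ r ∈ Finset.range (K + 1), Prk q m K r * (Pfr q a (K - r) * Pfr q b (K - r)) := by
  unfold P2
  simp only [Nat.add_sub_cancel, mul_assoc]
  refine Finset.sum_subset (fun r hr => ?_) fun r hr hr' => ?_
  · simp only [Finset.mem_Icc, Finset.mem_range] at *
    omega
  · simp only [Finset.mem_Icc, Finset.mem_range, not_and_or, not_le, lt_max_iff, min_lt_iff] at *
    rcases hr' with (h | h) | h | h
    · rw [pfr_eq_zero_of_lt q (by omega : a < K - r)]; ring
    · rw [pfr_eq_zero_of_lt q (by omega : b < K - r)]; ring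
    · rw [prk_eq_zero_of_lt q K h]; ring
    · omega

lemma p2_eq_zero_left (q K a b m : ℕ) (h : a + m < K) : P2 q K (a + m) (b + m) m = 0 := by
  unfold P2
  rw [Finset.Icc_eq_empty (by simp; omega), Finset.sum_empty]

lemma p2_eq_zero_right (q K a b m : ℕ) (h : b + m < K) : P2 q K (a + m) (b + m) m = 0 := by
  unfold P2
  rw [Finset.Icc_eq_empty (by simp; omega), Finset.sum_empty]

end RankLaws

section RandomSpan

open Module

/-- Resampling one coordinate leaves the uniform average unchanged. -/
lemma sum_sum_update {ι X : Type*} [Fintype ι] [DecidableEq ι] [Fintype X]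
    (a : ι) (g : (ι → X) → ℝ) :
    ∑ x : ι → X, ∑ v : X, g (Function.update x a v) = Fintype.card X * ∑ x, g x := by
  have h : ∑ p : (ι → X) × X, g (Function.update p.1 a p.2) = ∑ p : (ι → X) × X, g p.1 := by
    refine Finset.sum_nbij' (fun p => (Function.update p.1 a p.2, p.1 a))
      (fun p => (Function.update p.1 a p.2, p.1 a)) ?_ ?_ ?_ ?_ ?_ <;> simp
  rw [← Fintype.sum_prod_type', h, Fintype.sum_prod_type]
  simp [Finset.mul_sum]

variable {F : Type*} [Field F] {X V : Type*} [AddCommGroup V] [Module F V]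
  [AddCommGroup X] [Module F X]

lemma span_image_update_of_notMem {ι : Type*} [DecidableEq ι] (x : ι → V)
    {B : Finset ι} {a : ι} (ha : a ∉ B) (v : V) :
    Submodule.span F (Function.update x a v '' (B : Set ι)) =
      Submodule.span F (x '' (B : Set ι)) := by
  congr 1
  refine Set.image_congr fun r hr => ?_
  have : r ≠ a := by rintro rfl; exact ha hr
  simp [this]

lemma span_image_update_insert {ι : Type*} [DecidableEq ι] (x : ι → V)
    {B : Finset ι} {a : ι} (ha : a ∉ B) (v : V) :
    Submodule.span F (Function.update x a v '' ↑(insert a B)) =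
      Submodule.span F (x '' (B : Set ι)) ⊔ Submodule.span F {v} := by
  rw [Finset.coe_insert, Set.image_insert_eq, Submodule.span_insert,
    span_image_update_of_notMem x ha, Function.update_self, sup_comm]

lemma finrank_span_image_update_of_notMem {ι : Type*} [DecidableEq ι] (x : ι → V)
    {B : Finset ι} {a : ι} (ha : a ∉ B) (v : V) :
    finrank F (Submodule.span F (Function.update x a v '' (B : Set ι))) =
      finrank F (Submodule.span F (x '' (B : Set ι))) := by
  rw [span_image_update_of_notMem x ha]

lemma finrank_span_image_update_insert {ι : Type*} [DecidableEq ι] (x : ι → V)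
    {B : Finset ι} {a : ι} (ha : a ∉ B) (v : V) :
    finrank F (Submodule.span F (Function.update x a v '' ↑(insert a B))) =
      finrank F ↥(Submodule.span F (x '' (B : Set ι)) ⊔ Submodule.span F {v}) := by
  rw [span_image_update_insert x ha]

variable [Fintype V] [Fintype X]

lemma finrank_add_finrank_comap (ℓ : X →ₗ[F] V) (W : Submodule F V) :
    finrank F X + finrank F W ≤ finrank F V + finrank F (W.comap ℓ) := by
  have h1 := (W.mkQ ∘ₗ ℓ).finrank_range_add_finrank_ker
  have h2 : LinearMap.ker (W.mkQ ∘ₗ ℓ) = W.comap ℓ := by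
    rw [LinearMap.ker_comp, Submodule.ker_mkQ]
  have h3 := Submodule.finrank_le (LinearMap.range (W.mkQ ∘ₗ ℓ))
  have h4 := W.finrank_quotient_add_finrank
  rw [h2] at h1
  omega

variable [Fintype F]

lemma card_filter_mem_submodule (W : Submodule F X) [DecidablePred (· ∈ W)] :
    #{x : X | x ∈ W} = Fintype.card F ^ finrank F W := by
  rw [← Module.card_eq_pow_finrank (K := F) (V := W), Fintype.card_subtype]

/-- Law of the dimension of `W + ⟨ℓ g⟩` for uniformly random `g`. -/
lemma sum_finrank_sup_span_singleton (ℓ : X →ₗ[F] V) (W : Submodule F V) (f : ℕ → ℝ) :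
    ∑ g : X, f (finrank F ↥(W ⊔ Submodule.span F {ℓ g})) =
      (Fintype.card F : ℝ) ^ finrank F (W.comap ℓ) * f (finrank F W) +
        ((Fintype.card F : ℝ) ^ finrank F X - (Fintype.card F : ℝ) ^ finrank F (W.comap ℓ)) *
          f (finrank F W + 1) := by
  classical
  have hval : ∀ g : X, f (finrank F ↥(W ⊔ Submodule.span F {ℓ g})) =
      if g ∈ W.comap ℓ then f (finrank F W) else f (finrank F W + 1) := by
    intro g
    split_ifs with h
    · rw [sup_eq_left.2 ((Submodule.span_singleton_le_iff_mem _ _).2 (Submodule.mem_comap.1 h))]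
    · rw [Submodule.finrank_sup_span_singleton (p := W) fun h' => h (Submodule.mem_comap.2 h')]
  have hc := Finset.card_filter_add_card_filter_not (s := (Finset.univ : Finset X))
    (fun g => g ∈ W.comap ℓ)
  rw [card_filter_mem_submodule, Finset.card_univ, Module.card_eq_pow_finrank (K := F) (V := X)]
    at hc
  have hc' : (#{g : X | g ∉ W.comap ℓ} : ℝ) = (Fintype.card F : ℝ) ^ finrank F X -
      (Fintype.card F : ℝ) ^ finrank F (W.comap ℓ) := by
    rw [eq_sub_iff_add_eq']
    exact_mod_cast hc
  simp only [hval]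
  rw [Finset.sum_ite, Finset.sum_const, Finset.sum_const, card_filter_mem_submodule, nsmul_eq_mul,
    nsmul_eq_mul, hc']
  push_cast
  rfl

lemma two_le_card : 2 ≤ Fintype.card F := Fintype.one_lt_card

/-- Averaging the completion probability over one more vector, uniform on the range of `ℓ`,
gives at most the completion probability for uniform vectors. -/
lemma sum_pfr_sup_span_singleton_le (ℓ : X →ₗ[F] V) (W : Submodule F V) (n : ℕ) :
    ∑ g : X, Pfr (Fintype.card F) n
        (finrank F V - finrank F ↥(W ⊔ Submodule.span F {ℓ g})) ≤
      Fintype.card X * Pfr (Fintype.card F) (n + 1) (finrank F V - finrank F W) := by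
  have hq := two_le_card (F := F)
  have hWle := W.finrank_le
  rw [sum_finrank_sup_span_singleton ℓ W
    (fun d => Pfr (Fintype.card F) n (finrank F V - d)),
    Module.card_eq_pow_finrank (K := F) (V := X)]
  have hcle := (W.comap ℓ).finrank_le
  have hdim := finrank_add_finrank_comap ℓ W
  have hq1 : (1 : ℝ) ≤ Fintype.card F := by exact_mod_cast (by omega : 1 ≤ Fintype.card F)
  obtain hk | ⟨k, hk⟩ : finrank F V - finrank F W = 0 ∨
      ∃ k, finrank F V - finrank F W = k + 1 := by
    cases h : finrank F V - finrank F W <;> simp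
  · have hk' : finrank F V - (finrank F W + 1) = 0 := by omega
    simp only [hk, hk', pfr_zero]
    push_cast
    linarith
  · have hk' : finrank F V - (finrank F W + 1) = k := by omega
    simp only [hk, hk']
    rw [pfr_succ_left hq]
    have hpow : (Fintype.card F : ℝ) ^ finrank F X * (Fintype.card F : ℝ) ^ (-(k + 1 : ℤ)) ≤
        (Fintype.card F : ℝ) ^ finrank F (W.comap ℓ) := by
      rw [← zpow_natCast, ← zpow_natCast, ← zpow_add₀ (by positivity)]
      exact zpow_le_zpow_right₀ hq1 (by omega)
    have hmono := pfr_succ_right_le hq n k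
    push_cast
    nlinarith [mul_nonneg (sub_nonneg.2 hpow) (sub_nonneg.2 hmono)]

/-- Averaging the completion probability over one more uniform vector. -/
lemma sum_pfr_sup_span_singleton (W : Submodule F V) (n : ℕ) :
    ∑ v : V, Pfr (Fintype.card F) n
        (finrank F V - finrank F ↥(W ⊔ Submodule.span F {v})) =
      Fintype.card V * Pfr (Fintype.card F) (n + 1) (finrank F V - finrank F W) := by
  have hq := two_le_card (F := F)
  have hWle := W.finrank_le
  have := sum_finrank_sup_span_singleton LinearMap.id W
    (fun d => Pfr (Fintype.card F) n (finrank F V - d))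
  rw [Submodule.comap_id] at this
  simp only [LinearMap.id_apply] at this
  rw [this, Module.card_eq_pow_finrank (K := F) (V := V)]
  obtain hk | ⟨k, hk⟩ : finrank F V - finrank F W = 0 ∨
      ∃ k, finrank F V - finrank F W = k + 1 := by
    cases h : finrank F V - finrank F W <;> simp
  · have hk' : finrank F V - (finrank F W + 1) = 0 := by omega
    simp only [hk, hk', pfr_zero]
    push_cast
    ring
  · have hk' : finrank F V - (finrank F W + 1) = k := by omega
    simp only [hk, hk']
    rw [pfr_succ_left hq]
    have hpow : (Fintype.card F : ℝ) ^ finrank F W =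
        (Fintype.card F : ℝ) ^ finrank F V * (Fintype.card F : ℝ) ^ (-(k + 1 : ℤ)) := by
      rw [← zpow_natCast, ← zpow_natCast, ← zpow_add₀ (by positivity)]
      congr 1
      omega
    push_cast
    rw [hpow]
    ring

/-- Independent vectors, the `p`-th uniform on the range of `ℓ p`, complete `W` to the whole space
at most as likely as uniform vectors do. -/
lemma sum_indicator_sup_span_le {κ : Type*} [Fintype κ] [DecidableEq κ]
    (ℓ : κ → X →ₗ[F] V) (T : Finset κ) (W : Submodule F V) :
    ∑ G : κ → X, Set.indicator
        {G : κ → X | W ⊔ Submodule.span F ((fun p => ℓ p (G p)) '' T) = ⊤} 1 G ≤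
      Fintype.card (κ → X) * Pfr (Fintype.card F) #T (finrank F V - finrank F W) := by
  classical
  have hq := two_le_card (F := F)
  have hX : (0 : ℝ) < Fintype.card X := by exact_mod_cast Fintype.card_pos
  induction T using Finset.induction_on generalizing W with
  | empty =>
    simp only [Finset.coe_empty, Set.image_empty, Submodule.span_empty, sup_bot_eq, card_empty]
    by_cases hW : W = ⊤
    · subst hW
      simp [pfr_zero]
    · simp only [hW, Set.ofPred_false, Set.indicator_empty, Finset.sum_const_zero]
      exact mul_nonneg (Nat.cast_nonneg _) (pfr_nonneg hq _ _)
  | insert p T hp ih =>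
    rw [← mul_le_mul_iff_right₀ hX, ← sum_sum_update p, Finset.sum_comm]
    have hset : ∀ (g : X) (G : κ → X),
        Set.indicator {G : κ → X | W ⊔ Submodule.span F
          ((fun p => ℓ p (G p)) '' ↑(insert p T)) = ⊤} (1 : (κ → X) → ℝ) (Function.update G p g) =
        Set.indicator {G : κ → X | (W ⊔ Submodule.span F {ℓ p g}) ⊔ Submodule.span F
          ((fun p => ℓ p (G p)) '' ↑T) = ⊤} 1 G := by
      intro g G
      have himg : (fun r => ℓ r (Function.update G p g r)) '' (T : Set κ) =
          (fun r => ℓ r (G r)) '' (T : Set κ) := by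
        refine Set.image_congr fun r hr => ?_
        have : r ≠ p := by rintro rfl; exact hp hr
        simp [this]
      simp only [Set.indicator_apply, Set.mem_ofPred_eq, Finset.coe_insert, Set.image_insert_eq,
        himg, Function.update_self, Submodule.span_insert, sup_assoc, Pi.one_apply]
    simp only [hset]
    refine (Finset.sum_le_sum fun g _ => ih (W ⊔ Submodule.span F {ℓ p g})).trans ?_
    rw [← Finset.mul_sum, Finset.card_insert_of_notMem hp, mul_left_comm]
    exact mul_le_mul_of_nonneg_left (sum_pfr_sup_span_singleton_le (ℓ p) W #T)
      (Nat.cast_nonneg _)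

variable {ι : Type*} [Fintype ι] [DecidableEq ι]

/-- Conditionally on the vectors indexed by `B`, uniform vectors indexed by `S` complete them to a
spanning family with the probability given by `Pfr`. -/
lemma sum_mul_indicator_span_eq (S B : Finset ι) (hSB : Disjoint S B) (φ : (ι → V) → ℝ)
    (hφ : ∀ a ∉ B, ∀ x v, φ (Function.update x a v) = φ x) :
    ∑ x : ι → V, φ x * Set.indicator
        {x : ι → V | Submodule.span F (x '' ↑(S ∪ B)) = ⊤} 1 x =
      ∑ x : ι → V, φ x * Pfr (Fintype.card F) #S
        (finrank F V - finrank F (Submodule.span F (x '' (B : Set ι)))) := by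
  classical
  have hV : (Fintype.card V : ℝ) ≠ 0 := by exact_mod_cast Fintype.card_ne_zero
  induction S using Finset.induction_on generalizing B with
  | empty =>
    refine Finset.sum_congr rfl fun x _ => ?_
    congr 1
    rw [Finset.empty_union, Finset.card_empty, Set.indicator_apply]
    split_ifs with h
    · rw [h.out]
      simp [pfr_zero]
    · have hlt : finrank F (Submodule.span F (x '' (B : Set ι))) < finrank F V :=
        Submodule.finrank_lt h
      rw [pfr_eq_zero_of_lt _ (by omega)]
  | insert a S ha ih =>
    rw [Finset.disjoint_insert_left] at hSB
    rw [Finset.insert_union, ← Finset.union_insert, ih (insert a B)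
      (by rw [Finset.disjoint_insert_right]; exact ⟨ha, hSB.2⟩)
      (fun c hc => hφ c fun h => hc (Finset.mem_insert_of_mem h))]
    refine mul_left_cancel₀ hV ?_
    rw [← sum_sum_update a, Finset.mul_sum]
    refine Finset.sum_congr rfl fun x _ => ?_
    simp only [hφ a hSB.1, finrank_span_image_update_insert x hSB.1]
    rw [← Finset.mul_sum, sum_pfr_sup_span_singleton, Finset.card_insert_of_notMem ha]
    ring

/-- Law of the dimension of the span of the uniform vectors indexed by `B`. -/
lemma sum_finrank_span_eq (B : Finset ι) (f : ℕ → ℝ) :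
    ∑ x : ι → V, f (finrank F (Submodule.span F (x '' (B : Set ι)))) =
      Fintype.card (ι → V) * ∑ r ∈ Finset.range (finrank F V + 1),
        Prk (Fintype.card F) #B (finrank F V) r * f r := by
  classical
  have hq := two_le_card (F := F)
  have hq0 : (Fintype.card F : ℝ) ≠ 0 := by positivity
  have hV : (Fintype.card V : ℝ) ≠ 0 := by exact_mod_cast Fintype.card_ne_zero
  induction B using Finset.induction_on generalizing f with
  | empty =>
    have h : ∑ r ∈ Finset.range (finrank F V + 1),
        Prk (Fintype.card F) 0 (finrank F V) r * f r = f 0 := by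
      rw [Finset.sum_eq_single_of_mem 0 (by simp)
        (fun r _ hr => by rw [prk_eq_zero_of_lt _ _ (Nat.pos_of_ne_zero hr), zero_mul]),
        prk_zero_zero, one_mul]
    have h0 : ∀ x : ι → V,
        finrank F (Submodule.span F (x '' ((∅ : Finset ι) : Set ι))) = 0 := by
      intro x
      rw [Finset.coe_empty, Set.image_empty, Submodule.span_empty, finrank_bot]
    simp [h, h0]
  | insert a B ha ih =>
    have hstep : ∀ W : Submodule F V, ∑ v : V, f (finrank F ↥(W ⊔ Submodule.span F {v})) =
        Fintype.card V * ((Fintype.card F : ℝ) ^ ((finrank F W : ℤ) - finrank F V) *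
          f (finrank F W) + (1 - (Fintype.card F : ℝ) ^ ((finrank F W : ℤ) - finrank F V)) *
          f (finrank F W + 1)) := by
      intro W
      have := sum_finrank_sup_span_singleton LinearMap.id W f
      rw [Submodule.comap_id] at this
      simp only [LinearMap.id_apply] at this
      rw [this, Module.card_eq_pow_finrank (K := F) (V := V), zpow_sub₀ hq0, zpow_natCast,
        zpow_natCast]
      push_cast
      field_simp
    refine mul_left_cancel₀ hV ?_
    rw [← sum_sum_update a]
    simp only [finrank_span_image_update_insert _ ha, hstep]
    rw [← Finset.mul_sum, ih fun d => (Fintype.card F : ℝ) ^ ((d : ℤ) - finrank F V) * f d +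
      (1 - (Fintype.card F : ℝ) ^ ((d : ℤ) - finrank F V)) * f (d + 1)]
    congr 2
    rw [Finset.card_insert_of_notMem ha]
    generalize finrank F V = K
    simp only [mul_add, Finset.sum_add_distrib]
    rw [Finset.sum_range_succ' _ K, Finset.sum_range_succ _ K,
      Finset.sum_range_succ' (fun r => Prk (Fintype.card F) (#B + 1) K r * f r) K, sub_self,
      zpow_zero, sub_self, zero_mul, mul_zero, add_zero, prk_succ_zero hq]
    have : ∑ r ∈ Finset.range K, Prk (Fintype.card F) (#B + 1) K (r + 1) * f (r + 1) =
        ∑ r ∈ Finset.range K, (Prk (Fintype.card F) #B K (r + 1) *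
          ((Fintype.card F : ℝ) ^ (((r + 1 : ℕ) : ℤ) - K) * f (r + 1)) +
          Prk (Fintype.card F) #B K r *
          ((1 - (Fintype.card F : ℝ) ^ ((r : ℤ) - K)) * f (r + 1))) := by
      refine Finset.sum_congr rfl fun r hr => ?_
      rw [prk_succ_succ hq _ _ _ (Finset.mem_range.1 hr)]
      push_cast
      ring
    rw [this, Finset.sum_add_distrib]
    push_cast
    rw [zero_sub]
    ring

/-- Decoding bound for fixed reception patterns. -/
lemma sum_indicator_le_p2 {κ : Type*} [Fintype κ] [DecidableEq κ] (B S : Finset ι)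
    (hSB : Disjoint S B) (T : Finset κ) (ℓ : (ι → V) → κ → X →ₗ[F] V)
    (hℓ : ∀ x p g, ℓ x p g ∈ Submodule.span F (x '' ↑(S ∪ B))) :
    ∑ x : ι → V, ∑ G : κ → X, Set.indicator {G : κ → X |
        Submodule.span F (x '' (B : Set ι)) ⊔
          Submodule.span F ((fun p => ℓ x p (G p)) '' (T : Set κ)) = ⊤} 1 G ≤
      (Fintype.card (ι → V) : ℝ) * (Fintype.card (κ → X) : ℝ) *
        P2 (Fintype.card F) (finrank F V) (#T + #B) (#S + #B) #B := by
  classical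
  have hq := two_le_card (F := F)
  set k : (ι → V) → ℕ := fun x =>
    finrank F V - finrank F (Submodule.span F (x '' (B : Set ι))) with hk
  set E : Set (ι → V) := {x : ι → V | Submodule.span F (x '' ↑(S ∪ B)) = ⊤} with hE
  have hx : ∀ x : ι → V, ∑ G : κ → X, Set.indicator {G : κ → X |
        Submodule.span F (x '' (B : Set ι)) ⊔
          Submodule.span F ((fun p => ℓ x p (G p)) '' (T : Set κ)) = ⊤} (1 : (κ → X) → ℝ) G ≤
      Fintype.card (κ → X) * (Pfr (Fintype.card F) #T (k x) * Set.indicator E 1 x) := by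
    intro x
    by_cases h : x ∈ E
    · rw [Set.indicator_of_mem h, Pi.one_apply, mul_one]
      exact sum_indicator_sup_span_le (ℓ x) T _
    · rw [Set.indicator_of_notMem h, mul_zero, mul_zero]
      refine (Finset.sum_eq_zero fun G _ => Set.indicator_of_notMem (fun hG => h ?_) _).le
      change Submodule.span F (x '' ↑(S ∪ B)) = ⊤
      rw [eq_top_iff, ← hG.out, sup_le_iff, Submodule.span_le, Submodule.span_le]
      refine ⟨fun y hy => Submodule.subset_span (Set.image_mono (by simp) hy), ?_⟩
      rintro _ ⟨p, -, rfl⟩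
      exact hℓ x p _
  refine (Finset.sum_le_sum fun x _ => hx x).trans (le_of_eq ?_)
  rw [← Finset.mul_sum, sum_mul_indicator_span_eq S B hSB
    (fun x => Pfr (Fintype.card F) #T (k x))
    (fun a ha x v => by simp only [hk, finrank_span_image_update_of_notMem x ha]),
    sum_finrank_span_eq B (fun d => Pfr (Fintype.card F) #T (finrank F V - d) *
      Pfr (Fintype.card F) #S (finrank F V - d)), p2_eq_sum_range]
  ring

end RandomSpan

section ErasurePatterns

/-- Summing over Boolean patterns is summing over their supports. -/
lemma sum_bool_pattern_eq {ι : Type*} [Fintype ι] [DecidableEq ι] (h : Finset ι → ℝ) :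
    ∑ d : ι → Bool, h {i | d i = true} = ∑ S : Finset ι, h S := by
  refine Finset.sum_nbij' (fun d => ({i | d i = true} : Finset ι)) (fun S i => decide (i ∈ S))
    ?_ ?_ ?_ ?_ ?_ <;> simp

lemma prod_ite_bool_eq {ι : Type*} [Fintype ι] [DecidableEq ι] (d : ι → Bool) (x y : ℝ) :
    ∏ i, (if d i = true then x else y) =
      x ^ #{i | d i = true} * y ^ (Fintype.card ι - #{i | d i = true}) := by
  rw [Finset.prod_ite, Finset.prod_const, Finset.prod_const, Finset.filter_not,
    ← Finset.compl_eq_univ_sdiff, Finset.card_compl]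

lemma sum_bool_pattern_card_eq (N n : ℕ) (ε : ℝ) :
    ∑ d : Fin N → Bool with #{t | d t = true} = n,
      ∏ t, (if d t = true then 1 - ε else ε) = Bpmf n N ε := by
  simp only [prod_ite_bool_eq, Finset.sum_filter, Fintype.card_fin]
  rw [sum_bool_pattern_eq (fun S : Finset (Fin N) =>
    if #S = n then (1 - ε) ^ #S * ε ^ (N - #S) else 0), ← Finset.powerset_univ,
    Finset.sum_powerset_apply_card (fun k => if k = n then (1 - ε) ^ k * ε ^ (N - k) else 0)]
  simp only [Finset.card_univ, Fintype.card_fin, smul_ite, smul_zero, Finset.sum_ite_eq',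
    Finset.mem_range, nsmul_eq_mul, Bpmf, mul_assoc]
  split_ifs with h
  · rfl
  · rw [Nat.choose_eq_zero_of_lt (by omega)]
    simp

/-- The numbers of packets received from the relays are independent and binomial. -/
lemma sum_relay_destination_pattern (L N : ℕ) (ε : Fin L → ℝ) (f : (Fin L → ℕ) → ℝ) :
    ∑ d : Fin L → Fin N → Bool,
        (∏ j, ∏ t, (if d j t = true then 1 - ε j else ε j)) * f (fun j => #{t | d j t = true}) =
      ∑ v ∈ Fintype.piFinset (fun _ : Fin L => Finset.range (N + 1)),
        (∏ j, Bpmf (v j) N (ε j)) * f v := by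
  rw [← Finset.sum_fiberwise_of_maps_to
    (g := fun (d : Fin L → Fin N → Bool) (j : Fin L) => #{t | d j t = true})
    (t := Fintype.piFinset (fun _ : Fin L => Finset.range (N + 1)))]
  · refine Finset.sum_congr rfl fun v _ => ?_
    simp only [← sum_bool_pattern_card_eq]
    rw [Finset.prod_univ_sum, Finset.sum_mul]
    refine Finset.sum_congr ?_ fun d hd => ?_
    · ext d
      simp [funext_iff]
    · congr 2
      simpa [funext_iff] using hd
  · intro d _
    simp only [Fintype.mem_piFinset, Finset.mem_range, Nat.lt_succ_iff]
    intro j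
    exact (Finset.card_le_univ _).trans (by simp)

/-- A packet is missed by every relay with probability `∏ j, ε j`. -/
lemma sum_source_relay_column (L : ℕ) (ε : Fin L → ℝ) (u : Prop) [Decidable u] :
    ∑ c : Fin L → Bool with ((∃ j, c j = true) ↔ u),
      ∏ j, (if c j = true then 1 - ε j else ε j) = if u then 1 - ∏ j, ε j else ∏ j, ε j := by
  have hnone : ∑ c : Fin L → Bool with ¬ (∃ j, c j = true),
      ∏ j, (if c j = true then 1 - ε j else ε j) = ∏ j, ε j := by
    rw [Finset.sum_eq_single_of_mem (fun _ => false)]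
    · simp
    · simp
    · intro c hc hne
      refine absurd ?_ hne
      simpa [funext_iff] using hc
  have htot : ∑ c : Fin L → Bool, ∏ j, (if c j = true then 1 - ε j else ε j) = 1 := by
    rw [← Fintype.piFinset_univ,
      ← Finset.prod_univ_sum (fun _ => Finset.univ) fun j (b : Bool) =>
        if b = true then 1 - ε j else ε j]
    simp
  split_ifs with hu
  · simp only [hu, iff_true]
    rw [← Finset.sum_filter_add_sum_filter_not Finset.univ
      (fun c : Fin L → Bool => ∃ j, c j = true), hnone] at htot
    linarith
  · simpa only [hu, iff_false] using hnone

/-- The set of packets received by at least one relay contains each packet independently with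
probability `1 - ∏ j, ε j`. -/
lemma sum_source_relay_pattern {ι : Type*} [Fintype ι] [DecidableEq ι] (L : ℕ) (ε : Fin L → ℝ)
    (f : Finset ι → ℝ) :
    ∑ a : Fin L → ι → Bool, (∏ j, ∏ i, (if a j i = true then 1 - ε j else ε j)) *
        f {i | ∃ j, a j i = true} =
      ∑ U : Finset ι, (1 - ∏ j, ε j) ^ #U * (∏ j, ε j) ^ (Fintype.card ι - #U) * f U := by
  rw [← Finset.sum_fiberwise (g := fun a : Fin L → ι → Bool =>
    ({i | ∃ j, a j i = true} : Finset ι))]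
  refine Finset.sum_congr rfl fun U _ => ?_
  have hprod : (1 - ∏ j, ε j) ^ #U * (∏ j, ε j) ^ (Fintype.card ι - #U) =
      ∏ i : ι, if i ∈ U then 1 - ∏ j, ε j else ∏ j, ε j := by
    have := prod_ite_bool_eq (fun i => decide (i ∈ U)) (1 - ∏ j, ε j) (∏ j, ε j)
    simpa using this.symm
  rw [hprod]
  simp only [← sum_source_relay_column]
  rw [Finset.prod_univ_sum, Finset.sum_mul]
  refine Finset.sum_nbij' (fun a i j => a j i) (fun c j i => c i j) ?_ ?_ ?_ ?_ ?_
  · intro a ha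
    simp only [Finset.mem_filter, Finset.mem_univ, true_and] at ha
    simp [← ha]
  · intro c hc
    simp only [Fintype.mem_piFinset, Finset.mem_filter, Finset.mem_univ, true_and] at hc
    rw [Finset.mem_filter]
    refine ⟨Finset.mem_univ _, ?_⟩
    ext i
    simp [hc i]
  · intro a _; rfl
  · intro c _; rfl
  · intro a ha
    simp only [Finset.mem_filter, Finset.mem_univ, true_and] at ha
    rw [Finset.prod_comm, ha]

/-- Distribution of the size of a subset and of its intersection with a fixed set `U`. -/
lemma sum_finset_card_inter {ι : Type*} [Fintype ι] [DecidableEq ι] (U : Finset ι)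
    (g : ℕ → ℕ → ℝ) :
    ∑ B : Finset ι, g #B #(U ∩ B) =
      ∑ s ∈ Finset.range (#U + 1), ∑ t ∈ Finset.range (Fintype.card ι - #U + 1),
        ((#U).choose s : ℝ) * ((Fintype.card ι - #U).choose t : ℝ) * g (s + t) s := by
  have h : ∑ B : Finset ι, g #B #(U ∩ B) =
      ∑ p ∈ U.powerset ×ˢ Uᶜ.powerset, g (#p.1 + #p.2) #p.1 := by
    refine Finset.sum_nbij' (fun B => (U ∩ B, Uᶜ ∩ B)) (fun p => p.1 ∪ p.2) ?_ ?_ ?_ ?_ ?_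
    · intro B _
      simp [Finset.inter_subset_left]
    · simp
    · intro B _
      rw [← Finset.union_inter_distrib_right, Finset.union_compl, Finset.univ_inter]
    · rintro ⟨p, r⟩ hp
      simp only [Finset.mem_product, Finset.mem_powerset] at hp
      have h1 : ∀ i, i ∈ p → i ∈ U := fun _ hi => hp.1 hi
      have h2 : ∀ i, i ∈ r → i ∉ U := fun _ hi => Finset.mem_compl.1 (hp.2 hi)
      ext i
      all_goals
        simp only [Finset.mem_compl, Finset.mem_inter, Finset.mem_union]
        have := h1 i
        have := h2 i
        tauto
    · intro B _
      rw [← Finset.card_union_of_disjoint, ← Finset.union_inter_distrib_right,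
        Finset.union_compl, Finset.univ_inter]
      exact disjoint_compl_right.mono Finset.inter_subset_left Finset.inter_subset_left
  rw [h, Finset.sum_product, Finset.sum_powerset_apply_card
    (fun s => ∑ R ∈ Uᶜ.powerset, g (s + #R) s)]
  refine Finset.sum_congr rfl fun s _ => ?_
  rw [Finset.sum_powerset_apply_card (fun t => g (s + t) s), Finset.card_compl, nsmul_eq_mul,
    Finset.mul_sum]
  refine Finset.sum_congr rfl fun t _ => ?_
  rw [nsmul_eq_mul, mul_assoc]

/-- Pairs of subsets counted by their sizes and the size of their intersection. -/
lemma sum_finset_pair_card (N : ℕ) (g : ℕ → ℕ → ℕ → ℝ) :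
    ∑ U : Finset (Fin N), ∑ B : Finset (Fin N), g #U #B #(U ∩ B) =
      ∑ m ∈ Finset.range (N + 1), ∑ mD ∈ Finset.range (N + 1),
        ∑ mRD ∈ Finset.Icc (m + mD - N) (min m mD),
          (N.choose mRD : ℝ) * ((N - mRD).choose (m - mRD) : ℝ) *
            ((N - m).choose (mD - mRD) : ℝ) * g m mD mRD := by
  simp only [sum_finset_card_inter, Fintype.card_fin]
  rw [← Finset.powerset_univ, Finset.sum_powerset_apply_card (fun m =>
    ∑ s ∈ Finset.range (m + 1), ∑ t ∈ Finset.range (N - m + 1),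
      (m.choose s : ℝ) * ((N - m).choose t : ℝ) * g m (s + t) s),
    Finset.card_univ, Fintype.card_fin]
  refine Finset.sum_congr rfl fun m hm => ?_
  have hm' := Finset.mem_range.1 hm
  rw [nsmul_eq_mul, Finset.mul_sum]
  simp only [Finset.mul_sum]
  rw [Finset.sum_sigma', Finset.sum_sigma']
  refine Finset.sum_nbij' (fun p => ⟨p.1 + p.2, p.1⟩) (fun p => ⟨p.2, p.1 - p.2⟩) ?_ ?_ ?_ ?_ ?_
  · rintro ⟨s, t⟩ h
    simp only [Finset.mem_sigma, Finset.mem_range, Finset.mem_Icc] at *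
    omega
  · rintro ⟨s, t⟩ h
    simp only [Finset.mem_sigma, Finset.mem_range, Finset.mem_Icc] at *
    omega
  · rintro ⟨s, t⟩ h
    simp
  · rintro ⟨s, t⟩ h
    simp only [Finset.mem_sigma, Finset.mem_range, Finset.mem_Icc] at *
    have : t + (s - t) = s := by omega
    simp [this]
  · rintro ⟨s, t⟩ h
    simp only [Finset.mem_sigma, Finset.mem_range] at h
    have hc : (N.choose m : ℝ) * (m.choose s : ℝ) =
        (N.choose s : ℝ) * ((N - s).choose (m - s) : ℝ) := by
      exact_mod_cast Nat.choose_mul (n := N) (by omega : s ≤ m)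
    simp only [Nat.add_sub_cancel_left]
    rw [← hc]
    ring

end ErasurePatterns

section Decoding

open Module

/-- Relay `j` combining the packets it received with the coefficients `g`. -/
def relayCombination {F : Type*} [Field F] {K NS L : ℕ} (a : Fin L → Fin NS → Bool)
    (C : Fin NS → Fin K → F) (j : Fin L) : (Fin NS → F) →ₗ[F] (Fin K → F) :=
  ∑ i with a j i = true, (LinearMap.proj i : (Fin NS → F) →ₗ[F] F).smulRight (C i)

lemma relayCombination_apply {F : Type*} [Field F] {K NS L : ℕ} (a : Fin L → Fin NS → Bool)
    (C : Fin NS → Fin K → F) (j : Fin L) (g : Fin NS → F) :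
    relayCombination a C j g = ∑ i with a j i = true, g i • C i := by
  simp [relayCombination]

/-- Decoding succeeds iff the received packets span the message space. -/
lemma rank_destination_eq_iff {F : Type*} [Field F] {K NS NR L : ℕ}
    (C : Fin NS → Fin K → F) (b : Fin NS → Bool) (a : Fin L → Fin NS → Bool)
    (G : Fin L → Fin NR → Fin NS → F) (d : Fin L → Fin NR → Bool) :
    (Matrix.of (Sum.elim
        (fun (i : {i : Fin NS // b i = true}) (k : Fin K) => C i.1 k)
        (fun (p : Σ j : Fin L, {t : Fin NR // d j t = true}) (k : Fin K) =>
          ∑ i : {i : Fin NS // a p.1 i = true}, G p.1 p.2.1 i.1 * C i.1 k))).rank = K ↔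
      Submodule.span F (C '' ↑({i | b i = true} : Finset (Fin NS))) ⊔
        Submodule.span F ((fun p : Fin L × Fin NR => relayCombination a C p.1 (G p.1 p.2)) ''
          ↑({p | d p.1 p.2 = true} : Finset (Fin L × Fin NR))) = ⊤ := by
  have hrow : ∀ (j : Fin L) (t : Fin NR),
      (fun k => ∑ i : {i : Fin NS // a j i = true}, G j t i.1 * C i.1 k) =
        relayCombination a C j (G j t) := by
    intro j t
    ext k
    rw [relayCombination_apply, Finset.sum_apply, Finset.sum_subtype (p := fun i => a j i = true)
      _ (by simp)]
    rfl
  rw [Matrix.rank_eq_finrank_span_row, ← Submodule.span_union]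
  have hset : Set.range (Matrix.of (Sum.elim
        (fun (i : {i : Fin NS // b i = true}) (k : Fin K) => C i.1 k)
        (fun (p : Σ j : Fin L, {t : Fin NR // d j t = true}) (k : Fin K) =>
          ∑ i : {i : Fin NS // a p.1 i = true}, G p.1 p.2.1 i.1 * C i.1 k))).row =
      C '' ↑({i | b i = true} : Finset (Fin NS)) ∪
        (fun p : Fin L × Fin NR => relayCombination a C p.1 (G p.1 p.2)) ''
          ↑({p | d p.1 p.2 = true} : Finset (Fin L × Fin NR)) := by
    ext y
    constructor
    · rintro ⟨i | p, rfl⟩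
      · exact Or.inl ⟨i.1, by simp, rfl⟩
      · exact Or.inr ⟨(p.1, p.2.1), by simp [p.2.2], (hrow _ _).symm⟩
    · rintro (⟨i, hi, rfl⟩ | ⟨p, hp, rfl⟩)
      · exact ⟨Sum.inl ⟨i, by simpa using hi⟩, rfl⟩
      · exact ⟨Sum.inr ⟨p.1, p.2, by simpa using hp⟩, hrow _ _⟩
  rw [hset]
  constructor
  · intro h
    exact Submodule.eq_top_of_finrank_eq (by simpa using h)
  · intro h
    rw [h, finrank_top, Module.finrank_fin_fun]

lemma card_relay_receptions {L NR : ℕ} (d : Fin L → Fin NR → Bool) :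
    #({p | d p.1 p.2 = true} : Finset (Fin L × Fin NR)) = ∑ j, #{t | d j t = true} := by
  simp only [Finset.card_filter]
  exact Fintype.sum_prod_type _

/-- Decoding bound conditional on all reception patterns. -/
lemma sum_decoding_indicator_le {F : Type*} [Field F] [Fintype F] {K NS NR L : ℕ}
    (b : Fin NS → Bool) (a : Fin L → Fin NS → Bool) (d : Fin L → Fin NR → Bool)
    (U B : Finset (Fin NS)) (hU : U = ({i | ∃ j, a j i = true} : Finset (Fin NS)))
    (hB : B = ({i | b i = true} : Finset (Fin NS))) :
    ∑ C : Fin NS → Fin K → F, ∑ G : Fin L → Fin NR → Fin NS → F,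
      (if (Matrix.of (Sum.elim
        (fun (i : {i : Fin NS // b i = true}) (k : Fin K) => C i.1 k)
        (fun (p : Σ j : Fin L, {t : Fin NR // d j t = true}) (k : Fin K) =>
          ∑ i : {i : Fin NS // a p.1 i = true}, G p.1 p.2.1 i.1 * C i.1 k))).rank = K
        then (1 : ℝ) else 0) ≤
      (Fintype.card (Fin NS → Fin K → F) : ℝ) *
        (∏ _j : Fin L, (Fintype.card (Fin NR → Fin NS → F) : ℝ)) *
        P2 (Fintype.card F) K (∑ j, #{t | d j t = true} + #B) (#U - #(U ∩ B) + #B) #B := by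
  classical
  have key := sum_indicator_le_p2 (F := F) (V := Fin K → F) (X := Fin NS → F) B (U \ B)
    Finset.sdiff_disjoint ({p | d p.1 p.2 = true} : Finset (Fin L × Fin NR))
    (fun C p => relayCombination a C p.1) (by
      intro C p g
      rw [relayCombination_apply]
      refine Submodule.sum_mem _ fun i hi => Submodule.smul_mem _ _ (Submodule.subset_span ?_)
      refine ⟨i, ?_, rfl⟩
      have hi' : i ∈ U := by
        rw [hU]
        exact Finset.mem_filter.2 ⟨Finset.mem_univ _, p.1, (Finset.mem_filter.1 hi).2⟩
      by_cases h : i ∈ B <;> simp [hi', h])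
  rw [Module.finrank_fin_fun, card_relay_receptions, Finset.card_sdiff, Finset.inter_comm B U] at key
  refine le_trans (le_of_eq ?_) (key.trans (le_of_eq ?_))
  · refine Finset.sum_congr rfl fun C _ => ?_
    rw [← (Equiv.curry (Fin L) (Fin NR) (Fin NS → F)).sum_comp]
    refine Finset.sum_congr rfl fun G _ => ?_
    rw [Set.indicator_apply]
    refine if_congr ?_ rfl rfl
    rw [hB]
    exact rank_destination_eq_iff C b a (fun j t => G (j, t)) d
  · congr 2
    rw [Finset.prod_const, Finset.card_univ, Fintype.card_fin, ← Nat.cast_pow,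
      Fintype.card_congr (Equiv.curry (Fin L) (Fin NR) (Fin NS → F))]
    congr 1
    simp

end Decoding

/-- the RF model with `L ≥ 1` relays. Sample space: `C` a uniformly
random `N_S × K` matrix; `b` the destination reception pattern from the source
(w.p. `1-ε_SD` per row); `a j` the reception pattern of relay `j` (w.p. `1-ε_SR j`);
`G j` the recoding matrix of relay `j` (realised as a uniformly random `N_R × N_S`
matrix of which only the columns of the packets received by relay `j` are used);
`d j` the destination reception pattern from relay `j` (w.p. `1-ε_RD j`). The
destination matrix `C_D` stacks `C_B` and the matrices `(G j)_{D j} · C_{A j}`;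
decoding succeeds iff `rank C_D = K`. The probability of successful decoding is at
most the bound of Proposition 1, where `ε̃_SR = ∏ j ε_SR j` and the inner sum ranges
over tuples `(m'_1, …, m'_L)` with `0 ≤ m'_j ≤ N_R` and `∑ m'_j ≥ K - m_D`. -/
theorem rf_multi_relay_decoding_bound (q : ℕ) (F : Type) [Field F] [Fintype F]
    [DecidableEq F] (hF : Fintype.card F = q) (K NS NR L : ℕ) (hK : 1 ≤ K)
    (hNS : K ≤ NS) (hL : 1 ≤ L)
    (εSD : ℝ) (εSR εRD : Fin L → ℝ) (hSD : εSD ∈ Set.Icc (0:ℝ) 1)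
    (hSR : ∀ j, εSR j ∈ Set.Icc (0:ℝ) 1) (hRD : ∀ j, εRD j ∈ Set.Icc (0:ℝ) 1) :
    ∑ ω ∈ Finset.univ.filter
        (fun ω : Matrix (Fin NS) (Fin K) F × (Fin NS → Bool) ×
            (Fin L → Fin NS → Bool) × (Fin L → Matrix (Fin NR) (Fin NS) F) ×
            (Fin L → Fin NR → Bool) =>
          ((Matrix.of (Sum.elim
              (fun (i : {i : Fin NS // ω.2.1 i = true}) (k : Fin K) => ω.1 i.1 k)
              (fun (p : Σ j : Fin L, {t : Fin NR // ω.2.2.2.2 j t = true}) (k : Fin K) =>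
                ∑ i : {i : Fin NS // ω.2.2.1 p.1 i = true},
                  ω.2.2.2.1 p.1 p.2.1 i.1 * ω.1 i.1 k))).rank = K)),
      ((Fintype.card (Matrix (Fin NS) (Fin K) F) : ℝ))⁻¹ *
      (∏ _j : Fin L, ((Fintype.card (Matrix (Fin NR) (Fin NS) F) : ℝ))⁻¹) *
      (∏ i : Fin NS, (if ω.2.1 i then (1 - εSD) else εSD)) *
      (∏ j : Fin L, ∏ i : Fin NS, (if ω.2.2.1 j i then (1 - εSR j) else εSR j)) *
      (∏ j : Fin L, ∏ t : Fin NR, (if ω.2.2.2.2 j t then (1 - εRD j) else εRD j)) ≤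
    ∑ m ∈ Finset.range (NS + 1), ∑ mD ∈ Finset.range (NS + 1),
      (if K ≤ m + mD then
        ∑ mRD ∈ Finset.Icc (m + mD - NS) (min m mD),
          alphaRF NS (∏ j, εSR j) εSD m mD mRD *
            ∑ v ∈ Fintype.piFinset (fun _ : Fin L => Finset.range (NR + 1)),
              (if K ≤ (∑ j, v j) + mD then
                (∏ j, Bpmf (v j) NR (εRD j)) *
                  P2 q K ((∑ j, v j) + mD) (m - mRD + mD) mD
               else 0)
       else 0) := by
  classical
  subst hF
  set q := Fintype.card F
  set cC : ℝ := (Fintype.card (Matrix (Fin NS) (Fin K) F) : ℝ) with hcC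
  set cG : ℝ := ∏ _j : Fin L, (Fintype.card (Matrix (Fin NR) (Fin NS) F) : ℝ)
  have hcC0 : 0 < cC := by
    rw [hcC]; exact_mod_cast Fintype.card_pos
  have hcG0 : 0 < cG := Finset.prod_pos fun _ _ => by exact_mod_cast Fintype.card_pos
  let wB : (Fin NS → Bool) → ℝ := fun b => ∏ i, (if b i = true then 1 - εSD else εSD)
  let wA : (Fin L → Fin NS → Bool) → ℝ :=
    fun a => ∏ j, ∏ i, (if a j i = true then 1 - εSR j else εSR j)
  let wD : (Fin L → Fin NR → Bool) → ℝ :=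
    fun d => ∏ j, ∏ t, (if d j t = true then 1 - εRD j else εRD j)
  have hw : ∀ (ε : ℝ), ε ∈ Set.Icc (0 : ℝ) 1 → ∀ c : Bool,
      0 ≤ if c = true then 1 - ε else ε := by
    intro ε hε c
    split_ifs
    · linarith [hε.2]
    · exact hε.1
  have hwB : ∀ b, 0 ≤ wB b := fun b => Finset.prod_nonneg fun i _ => hw _ hSD _
  have hwA : ∀ a, 0 ≤ wA a :=
    fun a => Finset.prod_nonneg fun j _ => Finset.prod_nonneg fun i _ => hw _ (hSR j) _
  have hwD : ∀ d, 0 ≤ wD d :=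
    fun d => Finset.prod_nonneg fun j _ => Finset.prod_nonneg fun i _ => hw _ (hRD j) _
  let bound : ℕ → ℕ → ℕ → ℝ := fun n b u => P2 q K (n + b) (u + b) b
  let I : Matrix (Fin NS) (Fin K) F → (Fin NS → Bool) → (Fin L → Fin NS → Bool) →
      (Fin L → Matrix (Fin NR) (Fin NS) F) → (Fin L → Fin NR → Bool) → ℝ := fun C b a G d =>
    if (Matrix.of (Sum.elim
        (fun (i : {i : Fin NS // b i = true}) (k : Fin K) => C i.1 k)
        (fun (p : Σ j : Fin L, {t : Fin NR // d j t = true}) (k : Fin K) =>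
          ∑ i : {i : Fin NS // a p.1 i = true}, G p.1 p.2.1 i.1 * C i.1 k))).rank = K
      then (1 : ℝ) else 0
  have hI : ∀ b a d, ∑ C, ∑ G, I C b a G d ≤ cC * cG *
      bound (∑ j, #{t | d j t = true}) #{i | b i = true}
        (#{i | ∃ j, a j i = true} -
          #(({i | ∃ j, a j i = true} : Finset (Fin NS)) ∩ ({i | b i = true} : Finset (Fin NS)))) :=
    fun b a d => sum_decoding_indicator_le b a d _ _ rfl rfl
  calc _ = ∑ b, ∑ a, ∑ d, wB b * wA a * wD d * (cC⁻¹ * cG⁻¹ * ∑ C, ∑ G, I C b a G d) := ?_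
    _ ≤ ∑ b, ∑ a, ∑ d, wB b * wA a * wD d *
      bound (∑ j, #{t | d j t = true}) #{i | b i = true}
        (#{i | ∃ j, a j i = true} -
          #(({i | ∃ j, a j i = true} : Finset (Fin NS)) ∩
            ({i | b i = true} : Finset (Fin NS)))) := ?_
    _ = ∑ U : Finset (Fin NS), ∑ B : Finset (Fin NS),
        (1 - ∏ j, εSR j) ^ #U * (∏ j, εSR j) ^ (NS - #U) *
        ((1 - εSD) ^ #B * εSD ^ (NS - #B)) *
        ∑ v ∈ Fintype.piFinset (fun _ : Fin L => Finset.range (NR + 1)),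
          (∏ j, Bpmf (v j) NR (εRD j)) * bound (∑ j, v j) #B (#U - #(U ∩ B)) := ?_
    _ = _ := ?_
  · rw [Finset.sum_filter]
    simp only [Fintype.sum_prod_type, Finset.mul_sum]
    rw [Finset.sum_comm]
    refine Finset.sum_congr rfl fun b _ => ?_
    rw [Finset.sum_comm]
    refine Finset.sum_congr rfl fun a _ => ?_
    symm
    rw [Finset.sum_comm]
    refine Finset.sum_congr rfl fun C _ => ?_
    rw [Finset.sum_comm]
    refine Finset.sum_congr rfl fun G _ => Finset.sum_congr rfl fun d _ => ?_
    simp only [I, wB, wA, wD, cG, mul_ite, mul_one, mul_zero, Finset.prod_inv_distrib]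
    refine if_congr Iff.rfl ?_ rfl
    ring
  · refine Finset.sum_le_sum fun b _ => Finset.sum_le_sum fun a _ => Finset.sum_le_sum fun d _ =>
      mul_le_mul_of_nonneg_left ?_ (mul_nonneg (mul_nonneg (hwB b) (hwA a)) (hwD d))
    rw [← mul_inv, inv_mul_le_iff₀ (mul_pos hcC0 hcG0)]
    exact hI b a d
  · let relaySum : Finset (Fin NS) → Finset (Fin NS) → ℝ := fun U B =>
      ∑ v ∈ Fintype.piFinset (fun _ : Fin L => Finset.range (NR + 1)),
        (∏ j, Bpmf (v j) NR (εRD j)) * bound (∑ j, v j) #B (#U - #(U ∩ B))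
    have hd : ∀ U B : Finset (Fin NS), ∑ d, wD d *
        bound (∑ j, #{t | d j t = true}) #B (#U - #(U ∩ B)) = relaySum U B := fun U B =>
      sum_relay_destination_pattern L NR εRD (fun v => bound (∑ j, v j) #B (#U - #(U ∩ B)))
    have ha : ∀ B : Finset (Fin NS), ∑ a, wA a *
        relaySum ({i | ∃ j, a j i = true} : Finset (Fin NS)) B =
        ∑ U : Finset (Fin NS), (1 - ∏ j, εSR j) ^ #U * (∏ j, εSR j) ^ (NS - #U) *
          relaySum U B := fun B => by
      simpa using sum_source_relay_pattern L εSR (fun U => relaySum U B)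
    have hb : ∀ b : Fin NS → Bool, wB b =
        (1 - εSD) ^ #{i | b i = true} * εSD ^ (NS - #{i | b i = true}) := fun b => by
      simpa using prod_ite_bool_eq b (1 - εSD) εSD
    simp only [mul_assoc, ← Finset.mul_sum, hd, ha]
    simp only [hb]
    rw [sum_bool_pattern_eq (fun B : Finset (Fin NS) => (1 - εSD) ^ #B * εSD ^ (NS - #B) *
      ∑ U : Finset (Fin NS), (1 - ∏ j, εSR j) ^ #U * ((∏ j, εSR j) ^ (NS - #U) * relaySum U B))]
    change _ = ∑ U : Finset (Fin NS), (1 - ∏ j, εSR j) ^ #U * ((∏ j, εSR j) ^ (NS - #U) *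
      ∑ B : Finset (Fin NS), (1 - εSD) ^ #B * (εSD ^ (NS - #B) * relaySum U B))
    simp only [Finset.mul_sum]
    rw [Finset.sum_comm]
    refine Finset.sum_congr rfl fun U _ => Finset.sum_congr rfl fun B _ => ?_
    ring
  · rw [sum_finset_pair_card NS (fun m mD mRD => (1 - ∏ j, εSR j) ^ m *
        (∏ j, εSR j) ^ (NS - m) * ((1 - εSD) ^ mD * εSD ^ (NS - mD)) *
        ∑ v ∈ Fintype.piFinset (fun _ : Fin L => Finset.range (NR + 1)),
          (∏ j, Bpmf (v j) NR (εRD j)) * bound (∑ j, v j) mD (m - mRD))]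
    refine Finset.sum_congr rfl fun m _ => Finset.sum_congr rfl fun mD _ => ?_
    split_ifs with h
    · refine Finset.sum_congr rfl fun mRD _ => ?_
      have hv : ∀ v : Fin L → ℕ, (if K ≤ (∑ j, v j) + mD then
          (∏ j, Bpmf (v j) NR (εRD j)) * P2 q K ((∑ j, v j) + mD) (m - mRD + mD) mD else 0) =
          (∏ j, Bpmf (v j) NR (εRD j)) * bound (∑ j, v j) mD (m - mRD) := by
        intro v
        split_ifs with hv
        · rfl
        · rw [show bound (∑ j, v j) mD (m - mRD) = 0 from
            p2_eq_zero_left _ _ _ _ _ (by omega), mul_zero]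
      simp only [hv, alphaRF]
      ring
    · refine Finset.sum_eq_zero fun mRD _ => ?_
      have hz : ∀ n, bound n mD (m - mRD) = 0 := fun n => p2_eq_zero_right _ _ _ _ _ (by omega)
      simp [hz]
end
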